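/- arXiv:math/0212290 — 3 statements merged into one kernel-verified Lean document; each statement's English description precedes it below -/
import Mathlib

section
/- Let (y_1, y_2, y_3) ∈ (E^×)^3 satisfy: y_1y_2y_3 is a unit of O_E and q(y_iy_j)^{±1} ∈ O_E, q y_i^{±1} ∈ O_E for all 1 ≤ i ≠ j ≤ 3. Then for every permutation σ of {1,2,3} the triple (y_{σ(1)}, y_{σ(2)}, y_{σ(3)}) satisfies the same conditions; moreover, if χ and χ' are E-algebra homomorphisms A_E → E with χ(Y_i) = y_i and χ'(Y_i) = y_{σ(i)}, then the standard modules I_A(χ) and I_A(χ') both admit O_E-integral structures and the reductions of these integral structures to H_{F̄_p}-modules have isomorphic semisimplifications. -/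
/-- The defining relations of the affine Hecke algebra of type `A_2` (for `Gl_3`),
on the free algebra on four generators `T = X 0`, `T⁻¹ = X 1`, `S_1 = X 2`, `S_2 = X 3`. -/
inductive HeckeRel (R : Type) [CommRing R] (q : R) :
    FreeAlgebra R (Fin 4) → FreeAlgebra R (Fin 4) → Prop
  | TTinv : HeckeRel R q (FreeAlgebra.ι R 0 * FreeAlgebra.ι R 1) 1
  | TinvT : HeckeRel R q (FreeAlgebra.ι R 1 * FreeAlgebra.ι R 0) 1
  | quad : HeckeRel R q
      ((FreeAlgebra.ι R 2 + 1) * (FreeAlgebra.ι R 2 - algebraMap R (FreeAlgebra R (Fin 4)) q)) 0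
  | T3S1 : HeckeRel R q (FreeAlgebra.ι R 0 ^ 3 * FreeAlgebra.ι R 2)
      (FreeAlgebra.ι R 2 * FreeAlgebra.ι R 0 ^ 3)
  | braid : HeckeRel R q (FreeAlgebra.ι R 2 * FreeAlgebra.ι R 3 * FreeAlgebra.ι R 2)
      (FreeAlgebra.ι R 3 * FreeAlgebra.ι R 2 * FreeAlgebra.ι R 3)
  | TS2 : HeckeRel R q (FreeAlgebra.ι R 0 * FreeAlgebra.ι R 3)
      (FreeAlgebra.ι R 2 * FreeAlgebra.ι R 0)

/-- The affine Hecke algebra `H_R` with parameter `q ∈ R`. -/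
abbrev HeckeAlg (R : Type) [CommRing R] (q : R) := RingQuot (HeckeRel R q)

namespace HeckeAlg

variable (R : Type) [CommRing R] (q : R)

noncomputable def gen (i : Fin 4) : HeckeAlg R q :=
  RingQuot.mkAlgHom R (HeckeRel R q) (FreeAlgebra.ι R i)

noncomputable def T : HeckeAlg R q := gen R q 0
noncomputable def Tinv : HeckeAlg R q := gen R q 1
noncomputable def S1 : HeckeAlg R q := gen R q 2
noncomputable def S2 : HeckeAlg R q := gen R q 3

theorem T_mul_Tinv : T R q * Tinv R q = 1 := by
  simpa [T, Tinv, gen, map_mul, map_one] using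
    RingQuot.mkAlgHom_rel R (HeckeRel.TTinv (R := R) (q := q))

theorem Tinv_mul_T : Tinv R q * T R q = 1 := by
  simpa [T, Tinv, gen, map_mul, map_one] using
    RingQuot.mkAlgHom_rel R (HeckeRel.TinvT (R := R) (q := q))

theorem quad_rel : (S1 R q + 1) * (S1 R q - algebraMap R (HeckeAlg R q) q) = 0 := by
  simpa [S1, gen, map_mul, map_add, map_sub, map_one, map_zero, AlgHom.commutes] using
    RingQuot.mkAlgHom_rel R (HeckeRel.quad (R := R) (q := q))

theorem T3_mul_S1 : T R q ^ 3 * S1 R q = S1 R q * T R q ^ 3 := by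
  simpa [T, S1, gen, map_mul, map_pow] using
    RingQuot.mkAlgHom_rel R (HeckeRel.T3S1 (R := R) (q := q))

theorem braid_rel : S1 R q * S2 R q * S1 R q = S2 R q * S1 R q * S2 R q := by
  simpa [S1, S2, gen, map_mul] using
    RingQuot.mkAlgHom_rel R (HeckeRel.braid (R := R) (q := q))

theorem T_mul_S2 : T R q * S2 R q = S1 R q * T R q := by
  simpa [T, S1, S2, gen, map_mul] using
    RingQuot.mkAlgHom_rel R (HeckeRel.TS2 (R := R) (q := q))

/-- The canonical (base change) ring homomorphism `H_R → H_S` induced by a ring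
homomorphism `R → S` sending the parameter `q` to the parameter `q'`. -/
noncomputable def map {R S : Type} [CommRing R] [CommRing S] (f : R →+* S) (q : R) (q' : S)
    (h : f q = q') : HeckeAlg R q →+* HeckeAlg S q' := by
  subst h
  letI : Algebra R (HeckeAlg S (f q)) :=
    RingHom.toAlgebra' ((algebraMap S (HeckeAlg S (f q))).comp f)
      (fun c x => by simpa using Algebra.commutes (f c) x)
  refine RingQuot.lift
    ⟨((FreeAlgebra.lift R fun i => gen S (f q) i : _ →ₐ[R] HeckeAlg S (f q)) :
        FreeAlgebra R (Fin 4) →+* HeckeAlg S (f q)), ?_⟩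
  have key : ∀ i : Fin 4,
      (FreeAlgebra.lift R fun j => gen S (f q) j) (FreeAlgebra.ι R i) = gen S (f q) i :=
    fun i => FreeAlgebra.lift_ι_apply _ _
  have keyq : (FreeAlgebra.lift R fun j => gen S (f q) j)
      (algebraMap R (FreeAlgebra R (Fin 4)) q) = algebraMap S (HeckeAlg S (f q)) (f q) := by
    rw [AlgHom.commutes]
    rfl
  intro a b hab
  cases hab with
  | TTinv => simpa [key, T, Tinv] using T_mul_Tinv S (f q)
  | TinvT => simpa [key, T, Tinv] using Tinv_mul_T S (f q)
  | quad => simpa [key, keyq, S1] using quad_rel S (f q)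
  | T3S1 => simpa [key, T, S1] using T3_mul_S1 S (f q)
  | braid => simpa [key, S1, S2] using braid_rel S (f q)
  | TS2 => simpa [key, T, S1, S2] using T_mul_S2 S (f q)

/-- `S_1⁻¹ = q⁻¹ (S_1 - q + 1)`, where `qi` is an inverse of `q` in `R`. -/
noncomputable def S1i (qi : R) : HeckeAlg R q :=
  algebraMap R (HeckeAlg R q) qi * (S1 R q - algebraMap R (HeckeAlg R q) q + 1)

/-- `S_2⁻¹ = q⁻¹ (S_2 - q + 1)`, where `qi` is an inverse of `q` in `R`. -/
noncomputable def S2i (qi : R) : HeckeAlg R q :=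
  algebraMap R (HeckeAlg R q) qi * (S2 R q - algebraMap R (HeckeAlg R q) q + 1)

/-- The Bernstein elements `Y_1 = q S_1⁻¹ S_2⁻¹ T`, `Y_2 = S_2⁻¹ T S_1`,
`Y_3 = q⁻¹ T S_1 S_2`, where `qi` is an inverse of `q` in `R`. -/
noncomputable def Y (qi : R) : Fin 3 → HeckeAlg R q :=
  ![algebraMap R (HeckeAlg R q) q * S1i R q qi * S2i R q qi * T R q,
    S2i R q qi * T R q * S1 R q,
    algebraMap R (HeckeAlg R q) qi * T R q * S1 R q * S2 R q]

end HeckeAlg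

noncomputable section

/-- `H`, the affine Hecke algebra over `ℤ[q]` (with `q` an indeterminate). -/
abbrev HPoly : Type := HeckeAlg (Polynomial ℤ) Polynomial.X

variable (p : ℕ) [Fact p.Prime] (E : Type) [Field E] [Algebra ℚ_[p] E]
  [FiniteDimensional ℚ_[p] E] [Algebra ℤ_[p] E] [IsScalarTower ℤ_[p] ℚ_[p] E] (f : ℕ)

/-- The ring of integers `O_E` of the finite extension `E` of `ℚ_p`:
the integral closure of `ℤ_p` in `E`. -/
abbrev OE : Subalgebra ℤ_[p] E := integralClosure ℤ_[p] E

/-- `q_E = p^f ∈ O_E ⊆ E`, the image of the parameter `q`. -/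
def qE : E := (p : E) ^ f

/-- `H_E = H ⊗_{ℤ[q]} E`, realized as the Hecke algebra over `E` with parameter `q_E`. -/
abbrev HE : Type := HeckeAlg E (qE p E f)

/-- The canonical map `H → H_E` (image of `H` in `H_E`). -/
def ιE : HPoly →+* HE p E f :=
  HeckeAlg.map (Polynomial.eval₂RingHom (Int.castRingHom E) (qE p E f)) Polynomial.X
    (qE p E f) (Polynomial.eval₂_X _ _)

/-- The Bernstein elements `Y_1, Y_2, Y_3` of `H_E`. -/
def YE : Fin 3 → HE p E f := HeckeAlg.Y E (qE p E f) (qE p E f)⁻¹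

variable (u : Fin 3 → HE p E f)

/-- `A_E`, the commutative `E`-subalgebra of `H_E` generated by `Y_1^{±1}, Y_2^{±1}, Y_3^{±1}`;
here `u i` denotes the inverse of `Y_i`. -/
abbrev AE : Subalgebra E (HE p E f) :=
  Algebra.adjoin E (Set.range (YE p E f) ∪ Set.range u)

variable (χ : AE p E f u →ₐ[E] E)

/-- The value `y_i = χ(Y_i)` of an `E`-character `χ` of `A_E`. -/
def yval (i : Fin 3) : E :=
  χ ⟨YE p E f i, Algebra.subset_adjoin (Set.mem_union_left _ ⟨i, rfl⟩)⟩

/-- The left ideal of `H_E` generated by the elements `a - χ(a)`, `a ∈ A_E`. -/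
def Jχ : Submodule (HE p E f) (HE p E f) :=
  Submodule.span (HE p E f)
    {x : HE p E f | ∃ a : AE p E f u, x = (a : HE p E f) - algebraMap E (HE p E f) (χ a)}

/-- The standard module `I_A(χ) = H_E ⊗_{A_E, χ} E`, realized as the quotient of `H_E`
by the left ideal generated by the `a - χ(a)`, `a ∈ A_E`. -/
def StdMod : Type := HE p E f ⧸ Jχ p E f u χ

instance : AddCommGroup (StdMod p E f u χ) := by unfold StdMod; infer_instance
instance : Module (HE p E f) (StdMod p E f u χ) := by unfold StdMod; infer_instance
instance : Module E (StdMod p E f u χ) := by unfold StdMod; infer_instance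

/-- `L` is an `O_E`-integral structure of the standard module `I_A(χ)`:
an `O_E`-submodule which is free (it has an `O_E`-basis), stable under the image of `H`
in `H_E`, and contains an `E`-basis of `I_A(χ)`. -/
def IsIntegralStructure (L : Set (StdMod p E f u χ)) : Prop :=
  (0 ∈ L) ∧ (∀ x ∈ L, ∀ y ∈ L, x + y ∈ L) ∧
    (∀ (c : OE p E) (x : StdMod p E f u χ), x ∈ L → (c : E) • x ∈ L) ∧
    (∀ (h : HPoly) (x : StdMod p E f u χ), x ∈ L → ιE p E f h • x ∈ L) ∧
    (∃ (n : ℕ) (b : Fin n → StdMod p E f u χ), (∀ i, b i ∈ L) ∧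
      ∀ x ∈ L, ∃! c : Fin n → OE p E, x = ∑ i, ((c i : E) • b i)) ∧
    (∃ (m : ℕ) (bE : Module.Basis (Fin m) E (StdMod p E f u χ)), ∀ i, bE i ∈ L)

end

noncomputable section

/-- `F̄_p`, an algebraic closure of `F_p`. -/
abbrev Fbar (p : ℕ) [Fact p.Prime] : Type := AlgebraicClosure (ZMod p)

/-- `H_{F̄_p} = H ⊗_{ℤ[q]} F̄_p` with `q ↦ 0`. -/
abbrev HF (p : ℕ) [Fact p.Prime] : Type := HeckeAlg (Fbar p) 0

/-- The canonical map `H → H_{F̄_p}` (sending `q` to `0`). -/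
def ιF (p : ℕ) [Fact p.Prime] : HPoly →+* HF p :=
  HeckeAlg.map (Polynomial.eval₂RingHom (Int.castRingHom (Fbar p)) 0) Polynomial.X 0
    (Polynomial.eval₂_X _ _)

variable (p : ℕ) [Fact p.Prime] (E : Type) [Field E] [Algebra ℚ_[p] E]
  [FiniteDimensional ℚ_[p] E] [Algebra ℤ_[p] E] [IsScalarTower ℤ_[p] ℚ_[p] E] (f : ℕ)
  (u : Fin 3 → HE p E f) (χ : AE p E f u →ₐ[E] E)

/-- `(V, π)` realizes the reduction `L ⊗_{O_E, r} F̄_p` of the integral structure `L`: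
`π` is additive and `r`-semilinear on `L`, and some `O_E`-basis of `L` is sent by `π`
to an `F̄_p`-basis of `V`. -/
def IsReduction (r : OE p E →+* Fbar p) (L : Set (StdMod p E f u χ)) (V : Type)
    [AddCommGroup V] [Module (Fbar p) V] (π : StdMod p E f u χ → V) : Prop :=
  (∀ x ∈ L, ∀ y ∈ L, π (x + y) = π x + π y) ∧
  (∀ (c : OE p E), ∀ x ∈ L, π ((c : E) • x) = r c • π x) ∧
  (∃ (n : ℕ) (b : Fin n → StdMod p E f u χ),
    (∀ i, b i ∈ L) ∧
    (∀ x ∈ L, ∃! c : Fin n → OE p E, x = ∑ i, ((c i : E) • b i)) ∧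
    (∃ bV : Module.Basis (Fin n) (Fbar p) V, ∀ i, bV i = π (b i)))

/-- Two `H_{F̄_p}`-modules (given by representations `ρ, ρ'` on `F̄_p`-vector spaces
`V, V'`) have isomorphic semisimplifications: they admit Jordan–Hölder (composition)
series of the same length whose simple factors are isomorphic (as `H_{F̄_p}`-modules)
after a permutation, i.e. they have the same Jordan–Hölder factors counted with
multiplicity. -/
def SameJHFactors {V V' : Type} [AddCommGroup V] [Module (Fbar p) V]
    [AddCommGroup V'] [Module (Fbar p) V']
    (ρ : HF p →ₐ[Fbar p] Module.End (Fbar p) V)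
    (ρ' : HF p →ₐ[Fbar p] Module.End (Fbar p) V') : Prop :=
  ∃ (n : ℕ) (W : Fin (n + 1) → Submodule (Fbar p) V)
    (W' : Fin (n + 1) → Submodule (Fbar p) V') (σ : Equiv.Perm (Fin n))
    (hW : ∀ (j : Fin (n + 1)) (a : HF p), ∀ x ∈ W j, ρ a x ∈ W j)
    (hW' : ∀ (j : Fin (n + 1)) (a : HF p), ∀ x ∈ W' j, ρ' a x ∈ W' j),
    Monotone W ∧ W 0 = ⊥ ∧ W (Fin.last n) = ⊤ ∧
    Monotone W' ∧ W' 0 = ⊥ ∧ W' (Fin.last n) = ⊤ ∧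
    (∀ i : Fin n, W i.castSucc < W i.succ ∧
      ∀ U : Submodule (Fbar p) V, (∀ a : HF p, ∀ x ∈ U, ρ a x ∈ U) →
        W i.castSucc ≤ U → U ≤ W i.succ → U = W i.castSucc ∨ U = W i.succ) ∧
    (∀ i : Fin n, W' i.castSucc < W' i.succ ∧
      ∀ U : Submodule (Fbar p) V', (∀ a : HF p, ∀ x ∈ U, ρ' a x ∈ U) →
        W' i.castSucc ≤ U → U ≤ W' i.succ → U = W' i.castSucc ∨ U = W' i.succ) ∧
    ∀ i : Fin n,
      ∃ g : (W i.succ ⧸ (W i.castSucc).comap (W i.succ).subtype) ≃ₗ[Fbar p]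
          (W' (σ i).succ ⧸ (W' (σ i).castSucc).comap (W' (σ i).succ).subtype),
        ∀ (a : HF p) (x : W i.succ), ∃ y : W' (σ i).succ,
          g (Submodule.Quotient.mk x) = Submodule.Quotient.mk y ∧
          g (Submodule.Quotient.mk (⟨ρ a x.1, hW i.succ a x.1 x.2⟩ : W i.succ)) =
            Submodule.Quotient.mk (⟨ρ' a y.1, hW' (σ i).succ a y.1 y.2⟩ : W' (σ i).succ)

end

noncomputable section

variable (p : ℕ) [Fact p.Prime] (E : Type) [Field E] [Algebra ℚ_[p] E]
  [FiniteDimensional ℚ_[p] E] [Algebra ℤ_[p] E] [IsScalarTower ℤ_[p] ℚ_[p] E] (f : ℕ)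

/-- The integrality conditions on a triple `(y_1, y_2, y_3) ∈ (E^×)^3`:
`y_1y_2y_3` is a unit of `O_E`, and `q(y_iy_j)^{±1} ∈ O_E`, `q y_i^{±1} ∈ O_E`
for all `1 ≤ i ≠ j ≤ 3`. -/
def IntCond (y : Fin 3 → Eˣ) : Prop :=
  ((y 0 * y 1 * y 2 : Eˣ) : E) ∈ OE p E ∧ (((y 0 * y 1 * y 2)⁻¹ : Eˣ) : E) ∈ OE p E ∧
  ∀ i j : Fin 3, i ≠ j →
    qE p E f * ((y i * y j : Eˣ) : E) ∈ OE p E ∧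
    qE p E f * (((y i * y j)⁻¹ : Eˣ) : E) ∈ OE p E ∧
    qE p E f * (y i : E) ∈ OE p E ∧
    qE p E f * (((y i)⁻¹ : Eˣ) : E) ∈ OE p E

end

/-!
By Brauer–Nesbitt, the semisimplification of a finite-dimensional representation is determined by
the determinants `det ρ(a)` of all elements `a` of the algebra, so it is enough to compare these
for the two reductions.

The standard module `I_A(χ)` has the basis `S_w ⊗ 1`, `w ∈ S_3`, in which `T` and `S_i` act by
matrices that are polynomial in the values `y_i = χ(Y_i)`. For *generic* `y`, exchanging two
neighbouring `y_i` gives an isomorphic module: there is an explicit intertwiner whose determinant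
is a nonzero polynomial in `y`. Hence the determinant of a generic linear combination of words in
the generators is invariant under permutations of `y` as a polynomial identity, and so for every
`y`, including those where the two modules are not isomorphic. Its coefficients lie in `O_E` as
soon as an integral structure exists, and the identity can be reduced to `F̄_p`.

An integral structure is obtained by rescaling the basis `S_w ⊗ 1` by elements of `E`, written in
terms of `q`, the `y_i` and an element of maximal absolute value among `1`, `y_1` and `y_2⁻¹`.
-/

section BrauerNesbitt

section Density

variable {k A M : Type*} [Field k] [Ring A] [Algebra k A] [AddCommGroup M] [Module k M]
  [Module A M] [IsScalarTower k A M] [FiniteDimensional k M] [IsSemisimpleModule A M]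

/- The linear map acting as `t` on `P` and as `1` on `Q` commutes with `Module.End A M`, so the
density theorem realizes it by an element of `A`. -/
theorem exists_smul_eq_of_isCompl_isFullyInvariant {P Q : Submodule A M} (hPQ : IsCompl P Q)
    (hP : P.IsFullyInvariant) (hQ : Q.IsFullyInvariant) (t : k) :
    ∃ a : A, (∀ x ∈ P, a • x = t • x) ∧ ∀ x ∈ Q, a • x = x := by
  let π := P.projection Q hPQ
  have map_π (φ : Module.End A M) (x : M) : π (φ x) = φ (π x) := by
    have h_add : φ x = φ (π x) + φ (x - π x) := by rw [← map_add, add_sub_cancel]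
    rw [h_add, map_add, P.projection_apply_of_mem_left hPQ (hP φ (P.projection_apply_mem hPQ x)),
      (P.projection_apply_eq_zero_iff hPQ).2 (hQ φ (P.sub_projection_mem hPQ x)), add_zero]
  let e : Module.End (Module.End A M) M :=
    { toFun x := t • π x + (x - π x)
      map_add' x y := by simp only [map_add, smul_add]; abel
      map_smul' φ x := by
        simp only [Module.End.smul_def, map_π, RingHom.id_apply, map_add, map_sub,
          φ.map_smul_of_tower] }
  obtain ⟨a, ha⟩ := jacobson_density e (Set.finite_range (Module.finBasis k M)).toFinset
  have a_smul (x : M) : a • x = t • π x + (x - π x) := by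
    have h_ext : Algebra.lsmul k k M a
        = t • π.restrictScalars k + (LinearMap.id - π.restrictScalars k) :=
      (Module.finBasis k M).ext fun i ↦ (ha _ (by simp)).symm
    exact congr($h_ext x)
  refine ⟨a, fun x hx ↦ ?_, fun x hx ↦ ?_⟩
  · rw [a_smul, P.projection_apply_of_mem_left hPQ hx, sub_self, add_zero]
  · rw [a_smul, (P.projection_apply_eq_zero_iff hPQ).2 hx, smul_zero, sub_zero, zero_add]

theorem exists_smul_eq_of_mem_isotypicComponents {P : Submodule A M}
    (hP : P ∈ isotypicComponents A M) (t : k) :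
    ∃ a : A, (∀ x ∈ P, a • x = t • x) ∧
      ∀ P' ∈ isotypicComponents A M, P' ≠ P → ∀ x ∈ P', a • x = x := by
  let Q := sSup (isotypicComponents A M \ {P})
  have hPQ : IsCompl P Q := by
    refine ⟨sSupIndep_isotypicComponents A M hP, codisjoint_iff.2 ?_⟩
    rw [← sSup_isotypicComponents A M, ← sSup_insert, Set.insert_sdiff_singleton,
      Set.insert_eq_of_mem hP]
  have hQ : Q.IsFullyInvariant :=
    isFullyInvariant_iff_sSup_isotypicComponents.2 ⟨_, Set.sdiff_subset, rfl⟩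
  obtain ⟨a, haP, haQ⟩ :=
    exists_smul_eq_of_isCompl_isFullyInvariant hPQ (.of_mem_isotypicComponents hP) hQ t
  exact ⟨a, haP, fun P' hP' hne x hx ↦ haQ x (le_sSup (Set.mem_sdiff_singleton.2 ⟨hP', hne⟩) hx)⟩

end Density

section Embedding

variable {A M N N' : Type*} [Ring A] [AddCommGroup M] [Module A M] [AddCommGroup N] [Module A N]
  [AddCommGroup N'] [Module A N'] {g : N →ₗ[A] M}

theorem mem_isotypicComponent_of_injective (hg : Function.Injective g) (x : N) :
    g x ∈ isotypicComponent A M N :=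
  have h_mem : LinearMap.range g ∈ {m : Submodule A M | Nonempty (m ≃ₗ[A] N)} :=
    ⟨(LinearEquiv.ofInjective g hg).symm⟩
  le_sSup h_mem ⟨x, rfl⟩

theorem isotypicComponent_mem_isotypicComponents [IsSimpleModule A N]
    (hg : Function.Injective g) : isotypicComponent A M N ∈ isotypicComponents A M :=
  have e := LinearEquiv.ofInjective g hg
  ⟨LinearMap.range g, .congr e.symm, e.isotypicComponent_eq⟩

theorem nonempty_linearEquiv_of_isotypicComponent_eq [IsSimpleModule A N] [IsSimpleModule A N']
    (hg : Function.Injective g) (h : isotypicComponent A M N = isotypicComponent A M N') :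
    Nonempty (N ≃ₗ[A] N') := by
  have e := LinearEquiv.ofInjective g hg
  have := IsSimpleModule.congr e.symm
  have h_le : LinearMap.range g ≤ isotypicComponent A M N' := by
    rintro _ ⟨x, rfl⟩
    exact h ▸ mem_isotypicComponent_of_injective hg x
  have ⟨e'⟩ := isIsotypicOfType_submodule_iff.1 (.isotypicComponent A M N') _ h_le
  exact ⟨e.trans e'⟩

end Embedding

section SmulDet

variable (k : Type*) {A : Type*} [Field k] [Ring A] [Algebra k A]

/-- The determinant of an element `a` of a `k`-algebra acting on a module `M`; on a module that is
not finite-dimensional over `k` it has the junk value `1`. -/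
noncomputable def smulDet (M : Type*) [AddCommGroup M] [Module k M] [Module A M]
    [IsScalarTower k A M] (a : A) : k :=
  LinearMap.det (Algebra.lsmul k k M a)

variable {M M' : Type*} [AddCommGroup M] [Module k M] [Module A M] [IsScalarTower k A M]
  [AddCommGroup M'] [Module k M'] [Module A M'] [IsScalarTower k A M']

theorem smulDet_congr (e : M ≃ₗ[A] M') (a : A) : smulDet k M a = smulDet k M' a := by
  have h_conj : Algebra.lsmul k k M' a = (e.restrictScalars k).toLinearMap ∘ₗ
      Algebra.lsmul k k M a ∘ₗ (e.restrictScalars k).symm.toLinearMap := by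
    ext x
    simp
  rw [smulDet, smulDet, h_conj, LinearMap.det_conj]

variable {k} in
theorem smulDet_eq_pow_finrank {a : A} {t : k} (h : ∀ x : M, a • x = t • x) :
    smulDet k M a = t ^ Module.finrank k M := by
  have h_eq : Algebra.lsmul k k M a = t • LinearMap.id := LinearMap.ext h
  rw [smulDet, h_eq, LinearMap.det_smul, LinearMap.det_id, mul_one]

theorem smulDet_eq_mul_quotient [FiniteDimensional k M] (N : Submodule A M) (a : A) :
    smulDet k M a = smulDet k N a * smulDet k (M ⧸ N) a :=
  LinearMap.det_eq_det_mul_det (N.restrictScalars k) (Algebra.lsmul k k M a)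
    fun _ hx ↦ N.smul_mem a hx

end SmulDet

section Multiplicity

variable {k A : Type*} [Field k] [Ring A] [Algebra k A]
  {M : Type*} [AddCommGroup M] [Module k M] [Module A M] [IsScalarTower k A M]
  {S : Type*} [AddCommGroup S] [Module k S] [Module A S] [IsScalarTower k A S] [IsSimpleModule A S]
  {ι : Type*} [Fintype ι] {F : ι → Type*} [∀ i, AddCommGroup (F i)] [∀ i, Module k (F i)]
  [∀ i, Module A (F i)] [∀ i, IsScalarTower k A (F i)] [∀ i, IsSimpleModule A (F i)]

open Classical in
theorem prod_smulDet_eq_pow {g : ∀ i, F i →ₗ[A] M} (hg : ∀ i, Function.Injective (g i))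
    {a : A} {t : k} (ha : ∀ x ∈ isotypicComponent A M S, a • x = t • x)
    (ha' : ∀ P ∈ isotypicComponents A M, P ≠ isotypicComponent A M S → ∀ x ∈ P, a • x = x) :
    ∏ i, smulDet k (F i) a = t ^ (Module.finrank k S *
      Fintype.card {i // isotypicComponent A M (F i) = isotypicComponent A M S}) := by
  have h_factor (i : ι) : smulDet k (F i) a =
      if isotypicComponent A M (F i) = isotypicComponent A M S then t ^ Module.finrank k S
      else 1 := by
    have hx := mem_isotypicComponent_of_injective (hg i)
    split_ifs with h
    · obtain ⟨e⟩ := nonempty_linearEquiv_of_isotypicComponent_eq (hg i) h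
      rw [← (e.restrictScalars k).finrank_eq]
      refine smulDet_eq_pow_finrank fun x ↦ hg i ?_
      rw [map_smul, (g i).map_smul_of_tower, ha _ (h ▸ hx x)]
    · rw [smulDet_eq_pow_finrank (t := (1 : k)) fun x ↦ hg i ?_, one_pow]
      rw [map_smul, one_smul, ha' _ (isotypicComponent_mem_isotypicComponents (hg i)) h _ (hx x)]
  rw [Finset.prod_congr rfl fun i _ ↦ h_factor i, Finset.prod_ite, Finset.prod_const,
    Finset.prod_const_one, mul_one, Fintype.card_subtype, pow_mul]

theorem isSemisimpleModule_prod (A M N : Type*) [Ring A] [AddCommGroup M] [Module A M]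
    [AddCommGroup N] [Module A N] [IsSemisimpleModule A M] [IsSemisimpleModule A N] :
    IsSemisimpleModule A (M × N) := by
  have h := IsSemisimpleModule.sup (.range (LinearMap.inl A M N)) (.range (LinearMap.inr A M N))
  rw [LinearMap.sup_range_inl_inr] at h
  exact .congr Submodule.topEquiv.symm

theorem eq_of_forall_pow_eq [Infinite k] {m n : ℕ} (h : ∀ t : k, t ^ m = t ^ n) : m = n := by
  have h_poly : (Polynomial.X ^ m : Polynomial k) = Polynomial.X ^ n :=
    Polynomial.funext fun t ↦ by simpa only [Polynomial.eval_pow, Polynomial.eval_X] using h t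
  simpa only [Polynomial.natDegree_X_pow] using congr(Polynomial.natDegree $h_poly)

variable [Infinite k]
  {ι' : Type*} [Fintype ι'] {F' : ι' → Type*} [∀ j, AddCommGroup (F' j)] [∀ j, Module k (F' j)]
  [∀ j, Module A (F' j)] [∀ j, IsScalarTower k A (F' j)] [∀ j, IsSimpleModule A (F' j)]

open Classical in
theorem card_isotypicComponent_eq [FiniteDimensional k M] [IsSemisimpleModule A M]
    {g : ∀ i, F i →ₗ[A] M} (hg : ∀ i, Function.Injective (g i))
    {g' : ∀ j, F' j →ₗ[A] M} (hg' : ∀ j, Function.Injective (g' j))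
    (h : ∀ a : A, ∏ i, smulDet k (F i) a = ∏ j, smulDet k (F' j) a)
    {P : Submodule A M} (hP : P ∈ isotypicComponents A M) :
    Fintype.card {i // isotypicComponent A M (F i) = P} =
      Fintype.card {j // isotypicComponent A M (F' j) = P} := by
  obtain ⟨S, _, rfl⟩ := id hP
  have h_finrank_pos : 0 < Module.finrank k S :=
    have := IsSimpleModule.nontrivial A S
    have : FiniteDimensional k S := inferInstanceAs (FiniteDimensional k (S.restrictScalars k))
    Module.finrank_pos
  refine mul_left_cancel₀ h_finrank_pos.ne' (eq_of_forall_pow_eq (k := k) fun t ↦ ?_)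
  obtain ⟨a, ha, ha'⟩ := exists_smul_eq_of_mem_isotypicComponents hP t
  rw [← prod_smulDet_eq_pow hg ha ha', ← prod_smulDet_eq_pow hg' ha ha', h a]

theorem exists_equiv_nonempty_linearEquiv_of_prod_smulDet_eq
    [∀ i, FiniteDimensional k (F i)] [∀ j, FiniteDimensional k (F' j)]
    (h : ∀ a : A, ∏ i, smulDet k (F i) a = ∏ j, smulDet k (F' j) a) :
    ∃ e : ι ≃ ι', ∀ i, Nonempty (F i ≃ₗ[A] F' (e i)) := by
  classical
  let M := (Π i, F i) × (Π j, F' j)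
  have : IsSemisimpleModule A M := isSemisimpleModule_prod A _ _
  let g (i : ι) : F i →ₗ[A] M := LinearMap.inl A _ _ ∘ₗ LinearMap.single A F i
  let g' (j : ι') : F' j →ₗ[A] M := LinearMap.inr A _ _ ∘ₗ LinearMap.single A F' j
  have hg (i : ι) : Function.Injective (g i) :=
    LinearMap.inl_injective.comp (Pi.single_injective i)
  have hg' (j : ι') : Function.Injective (g' j) :=
    LinearMap.inr_injective.comp (Pi.single_injective j)
  let c (i : ι) : isotypicComponents A M :=
    ⟨_, isotypicComponent_mem_isotypicComponents (hg i)⟩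
  let c' (j : ι') : isotypicComponents A M :=
    ⟨_, isotypicComponent_mem_isotypicComponents (hg' j)⟩
  have h_fiber (P : isotypicComponents A M) : Nonempty ({i // c i = P} ≃ {j // c' j = P}) := by
    rw [← Fintype.card_eq]
    simpa only [c, c', Subtype.ext_iff] using card_isotypicComponent_eq hg hg' h P.2
  let e := Equiv.ofFiberEquiv fun P ↦ (h_fiber P).some
  have h_map (i : ι) : c' (e i) = c i := Equiv.ofFiberEquiv_map _ i
  exact ⟨e, fun i ↦ nonempty_linearEquiv_of_isotypicComponent_eq (hg i)
    (congrArg Subtype.val (h_map i)).symm⟩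

end Multiplicity

section CompositionSeries

theorem exists_compositionSeries_of_finiteDimensional (k A V : Type*) [Field k] [Ring A]
    [Algebra k A] [AddCommGroup V] [Module k V] [Module A V] [IsScalarTower k A V]
    [FiniteDimensional k V] :
    ∃ s : CompositionSeries (Submodule A V), s.head = ⊥ ∧ s.last = ⊤ :=
  have : IsNoetherian A V := isNoetherian_of_tower k inferInstance
  have : IsArtinian A V := isArtinian_of_tower k inferInstance
  exists_compositionSeries_of_isNoetherian_isArtinian A V

variable {k A V V' : Type*} [Field k] [Ring A] [Algebra k A]
  [AddCommGroup V] [Module k V] [Module A V] [IsScalarTower k A V] [FiniteDimensional k V]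
  [AddCommGroup V'] [Module k V'] [Module A V'] [IsScalarTower k A V'] [FiniteDimensional k V']

/-- The `i`-th composition factor of a composition series of submodules. -/
abbrev compositionFactor (s : CompositionSeries (Submodule A V)) (i : Fin s.length) : Type _ :=
  s i.succ ⧸ (s i.castSucc).submoduleOf (s i.succ)

theorem isSimpleModule_compositionFactor (s : CompositionSeries (Submodule A V))
    (i : Fin s.length) : IsSimpleModule A (compositionFactor s i) :=
  (covBy_iff_quot_is_simple (s.step i).le).1 (s.step i)

theorem finiteDimensional_compositionFactor (s : CompositionSeries (Submodule A V))
    (i : Fin s.length) : FiniteDimensional k (compositionFactor s i) :=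
  have : FiniteDimensional k (s i.succ) :=
    inferInstanceAs (FiniteDimensional k ((s i.succ).restrictScalars k))
  inferInstanceAs (FiniteDimensional k
    (s i.succ ⧸ ((s i.castSucc).submoduleOf (s i.succ)).restrictScalars k))

theorem smulDet_eq_prod_compositionFactor (s : CompositionSeries (Submodule A V))
    (h_head : s.head = ⊥) (h_last : s.last = ⊤) (a : A) :
    smulDet k V a = ∏ i, smulDet k (compositionFactor s i) a := by
  have h_step (i : Fin s.length) : smulDet k (s i.succ) a =
      smulDet k (s i.castSucc) a * smulDet k (compositionFactor s i) a := by
    have : FiniteDimensional k (s i.succ) :=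
      inferInstanceAs (FiniteDimensional k ((s i.succ).restrictScalars k))
    rw [smulDet_eq_mul_quotient k ((s i.castSucc).submoduleOf (s i.succ)),
      smulDet_congr k (Submodule.submoduleOfEquivOfLe (s.step i).le)]
  have h_partial (j : Fin (s.length + 1)) : smulDet k (s j) a =
      Fin.partialProd (fun i ↦ smulDet k (compositionFactor s i) a) j := by
    induction j using Fin.induction with
    | zero =>
      have : Subsingleton (s 0) := Submodule.subsingleton_iff_eq_bot.2 h_head
      rw [Fin.partialProd_zero, smulDet, LinearMap.det_eq_one_of_subsingleton]
    | succ i ih => rw [h_step, ih, Fin.partialProd_succ]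
  have h_top : s (Fin.last s.length) = ⊤ := h_last
  rw [← smulDet_congr k (Submodule.topEquiv (R := A) (M := V)), ← h_top, h_partial,
    Fin.partialProd, Fin.val_last, List.take_of_length_le (List.length_ofFn).le, List.prod_ofFn]

/-- The Brauer–Nesbitt theorem. -/
theorem exists_equiv_compositionFactor_of_smulDet_eq [Infinite k]
    (h : ∀ a : A, smulDet k V a = smulDet k V' a)
    (s : CompositionSeries (Submodule A V)) (h_head : s.head = ⊥) (h_last : s.last = ⊤)
    (s' : CompositionSeries (Submodule A V')) (h_head' : s'.head = ⊥) (h_last' : s'.last = ⊤) :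
    ∃ e : Fin s.length ≃ Fin s'.length,
      ∀ i, Nonempty (compositionFactor s i ≃ₗ[A] compositionFactor s' (e i)) := by
  have := isSimpleModule_compositionFactor s
  have := isSimpleModule_compositionFactor s'
  have := finiteDimensional_compositionFactor (k := k) s
  have := finiteDimensional_compositionFactor (k := k) s'
  refine exists_equiv_nonempty_linearEquiv_of_prod_smulDet_eq (k := k) fun a ↦ ?_
  rw [← smulDet_eq_prod_compositionFactor s h_head h_last,
    ← smulDet_eq_prod_compositionFactor s' h_head' h_last', h]

end CompositionSeries

end BrauerNesbitt

section SameJHFactors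

theorem restrictScalars_eq_or_eq_of_covBy (k : Type*) {A M : Type*} [CommRing k] [Ring A]
    [Algebra k A] [AddCommGroup M] [Module k M] [Module A M] [IsScalarTower k A M]
    {N N' : Submodule A M} (h : N ⋖ N') {U : Submodule k M}
    (hU : ∀ (a : A), ∀ x ∈ U, a • x ∈ U) (hNU : N.restrictScalars k ≤ U)
    (hUN' : U ≤ N'.restrictScalars k) :
    U = N.restrictScalars k ∨ U = N'.restrictScalars k := by
  let UA : Submodule A M := { U with smul_mem' := fun a x hx ↦ hU a x hx }
  have h_eq : U = UA.restrictScalars k := rfl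
  exact (h.eq_or_eq (c := UA) hNU hUN').imp (h_eq.trans <| congrArg _ ·)
    (h_eq.trans <| congrArg _ ·)

theorem sameJHFactors_of_det_eq {p : ℕ} [Fact p.Prime] {V V' : Type}
    [AddCommGroup V] [Module (Fbar p) V] [FiniteDimensional (Fbar p) V]
    [AddCommGroup V'] [Module (Fbar p) V'] [FiniteDimensional (Fbar p) V']
    {ρ : HF p →ₐ[Fbar p] Module.End (Fbar p) V} {ρ' : HF p →ₐ[Fbar p] Module.End (Fbar p) V'}
    (h : ∀ a, (ρ a).det = (ρ' a).det) : SameJHFactors p ρ ρ' := by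
  have : Infinite (Fbar p) := IsAlgClosed.instInfinite
  let _ : Module (HF p) V := Module.compHom V ρ.toRingHom
  let _ : Module (HF p) V' := Module.compHom V' ρ'.toRingHom
  have : IsScalarTower (Fbar p) (HF p) V := ⟨fun c a x ↦ congr($(map_smul ρ c a) x)⟩
  have : IsScalarTower (Fbar p) (HF p) V' := ⟨fun c a x ↦ congr($(map_smul ρ' c a) x)⟩
  obtain ⟨s, h_head, h_last⟩ := exists_compositionSeries_of_finiteDimensional (Fbar p) (HF p) V
  obtain ⟨s', h_head', h_last'⟩ :=
    exists_compositionSeries_of_finiteDimensional (Fbar p) (HF p) V'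
  obtain ⟨e, he⟩ := exists_equiv_compositionFactor_of_smulDet_eq (k := Fbar p) h
    s h_head h_last s' h_head' h_last'
  have h_mono := s.strictMono.monotone
  have h_mono' := s'.strictMono.monotone
  obtain ⟨n, W, hW⟩ := s
  obtain ⟨n', W', hW'⟩ := s'
  obtain rfl : n = n' := by simpa only [Fintype.card_fin] using Fintype.card_congr e
  refine ⟨n, fun j ↦ (W j).restrictScalars _, fun j ↦ (W' j).restrictScalars _, e,
    fun j a x ↦ (W j).smul_mem a, fun j a x ↦ (W' j).smul_mem a,
    h_mono, congrArg _ h_head, congrArg _ h_last, h_mono', congrArg _ h_head', congrArg _ h_last',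
    fun i ↦ ⟨(hW i).lt, fun U ↦ restrictScalars_eq_or_eq_of_covBy _ (hW i)⟩,
    fun i ↦ ⟨(hW' i).lt, fun U ↦ restrictScalars_eq_or_eq_of_covBy _ (hW' i)⟩, fun i ↦ ?_⟩
  obtain ⟨g⟩ := he i
  refine ⟨g.restrictScalars (Fbar p), fun a x ↦ ?_⟩
  obtain ⟨y, hy⟩ := Submodule.Quotient.mk_surjective _ (g (Submodule.Quotient.mk x))
  exact ⟨y, hy.symm, (g.map_smul a _).trans (congrArg (a • ·) hy.symm)⟩

end SameJHFactors

section GenericDet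

open MvPolynomial

variable {ι n R S : Type*} [Fintype n] [DecidableEq n] [CommRing R] [CommRing S]

/-- The linear combination of the words `w ∈ s` in the matrices `A i`, with independent variables
as coefficients. -/
noncomputable def genericMatrix (A : ι → Matrix n n R) (s : Finset (FreeMonoid ι)) :
    Matrix n n (MvPolynomial (FreeMonoid ι) R) :=
  ∑ w ∈ s, (X w : MvPolynomial (FreeMonoid ι) R) • C.mapMatrix (FreeMonoid.lift A w)

/-- The determinant of the generic linear combination of the words `w ∈ s` in the matrices `A i`.
Specializing its variables gives the determinants of all elements of the algebra generated by the
`A i`, over every commutative ring to which the `A i` are mapped. -/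
noncomputable def genericDet (A : ι → Matrix n n R) (s : Finset (FreeMonoid ι)) :
    MvPolynomial (FreeMonoid ι) R :=
  (genericMatrix A s).det

theorem mapMatrix_lift (φ : R →+* S) (A : ι → Matrix n n R) (w : FreeMonoid ι) :
    φ.mapMatrix (FreeMonoid.lift A w) = FreeMonoid.lift (fun i ↦ φ.mapMatrix (A i)) w :=
  FreeMonoid.hom_map_lift φ.mapMatrix.toMonoidHom A w

theorem eval₂Hom_genericDet (φ : R →+* S) (c : FreeMonoid ι → S) (A : ι → Matrix n n R)
    (s : Finset (FreeMonoid ι)) : eval₂Hom φ c (genericDet A s) =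
      (∑ w ∈ s, c w • FreeMonoid.lift (fun i ↦ φ.mapMatrix (A i)) w).det := by
  rw [genericDet, RingHom.map_det, genericMatrix, map_sum]
  congr! 2 with w
  rw [← mapMatrix_lift]
  ext i j
  simp

theorem map_genericDet (φ : R →+* S) (A : ι → Matrix n n R) (s : Finset (FreeMonoid ι)) :
    MvPolynomial.map φ (genericDet A s) = genericDet (fun i ↦ φ.mapMatrix (A i)) s := by
  rw [genericDet, RingHom.map_det, genericMatrix, map_sum, genericDet, genericMatrix]
  congr! 2 with w
  rw [← mapMatrix_lift]
  ext i j : 2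
  simp

theorem genericDet_eq_of_intertwining [IsDomain R] {A B : ι → Matrix n n R} {P : Matrix n n R}
    (hP : P.det ≠ 0) (h : ∀ i, P * A i = B i * P) (s : Finset (FreeMonoid ι)) :
    genericDet A s = genericDet B s := by
  have h_word (w : FreeMonoid ι) : P * FreeMonoid.lift A w = FreeMonoid.lift B w * P := by
    induction w using FreeMonoid.inductionOn' with
    | one => simp
    | of_mul i w ih =>
      rw [map_mul, map_mul, FreeMonoid.lift_eval_of, FreeMonoid.lift_eval_of, ← mul_assoc, h,
        mul_assoc, ih, mul_assoc]
  have h_generic : C.mapMatrix P * genericMatrix A s = genericMatrix B s * C.mapMatrix P := by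
    simp only [genericMatrix, Finset.mul_sum, Finset.sum_mul, mul_smul_comm, smul_mul_assoc,
      ← map_mul, h_word]
  have h_det := congrArg Matrix.det h_generic
  rw [Matrix.det_mul, Matrix.det_mul, mul_comm, ← RingHom.map_det] at h_det
  exact mul_right_cancel₀ (C_ne_zero.2 hP) h_det

theorem exists_lift_eq_sum (a : FreeAlgebra R ι) :
    ∃ (s : Finset (FreeMonoid ι)) (c : FreeMonoid ι → R), ∀ A : ι → Matrix n n R,
      FreeAlgebra.lift R A a = ∑ w ∈ s, c w • FreeMonoid.lift A w := by
  let a' := FreeAlgebra.equivMonoidAlgebraFreeMonoid a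
  refine ⟨a'.coeff.support, a'.coeff, fun A ↦ ?_⟩
  have h_lift : FreeAlgebra.lift R A = (MonoidAlgebra.lift R _ _ (FreeMonoid.lift A)).comp
      FreeAlgebra.equivMonoidAlgebraFreeMonoid.toAlgHom := by
    ext i : 2
    simp [FreeAlgebra.equivMonoidAlgebraFreeMonoid]
  rw [h_lift]
  exact MonoidAlgebra.lift_apply _ _

theorem det_lift_eq_of_genericDet_eq {A B : ι → Matrix n n R}
    (h : ∀ s, genericDet A s = genericDet B s) (φ : R →+* S) (a : FreeAlgebra S ι) :
    (FreeAlgebra.lift S (fun i ↦ φ.mapMatrix (A i)) a).det =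
      (FreeAlgebra.lift S (fun i ↦ φ.mapMatrix (B i)) a).det := by
  obtain ⟨s, c, hc⟩ := exists_lift_eq_sum (n := n) a
  rw [hc, hc, ← eval₂Hom_genericDet, h, eval₂Hom_genericDet]

end GenericDet

section StandardMatrices

variable {R S : Type*} [CommRing R] [CommRing S]

/-- The matrix of `T` on the standard module with parameters `y`, in the basis
`v, S₁v, S₂v, S₁S₂v, S₂S₁v, S₁S₂S₁v`; here `qi` stands for `q⁻¹`. -/
def tMatrix (q qi : R) (y : Fin 3 → R) : Matrix (Fin 6) (Fin 6) R :=
  !![0, 0, 0, q * y 2, 0, 0;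
     0, 0, 0, 0, 0, q * y 2;
     0, y 1, 0, 0, 0, 0;
     0, 0, 0, 0, y 1, 0;
     qi * y 0, 0, 0, 0, 0, 0;
     0, 0, qi * y 0, 0, 0, 0]

/-- The matrices of `S₁` and `S₂` on a standard module, in the basis of `tMatrix`. -/
def sMatrix (q : R) : Fin 2 → Matrix (Fin 6) (Fin 6) R :=
  ![!![0, q, 0, 0, 0, 0;
       1, q - 1, 0, 0, 0, 0;
       0, 0, 0, q, 0, 0;
       0, 0, 1, q - 1, 0, 0;
       0, 0, 0, 0, 0, q;
       0, 0, 0, 0, 1, q - 1],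
    !![0, 0, q, 0, 0, 0;
       0, 0, 0, 0, q, 0;
       1, 0, q - 1, 0, 0, 0;
       0, 0, 0, 0, 0, q;
       0, 1, 0, 0, q - 1, 0;
       0, 0, 0, 1, 0, q - 1]]

/-- The matrices of `S_w v ↦ S_w S₁ v` and `S_w v ↦ S_w S₂ v`, in the basis of `tMatrix`. -/
def rightSMatrix (q : R) : Fin 2 → Matrix (Fin 6) (Fin 6) R :=
  ![!![0, q, 0, 0, 0, 0;
       1, q - 1, 0, 0, 0, 0;
       0, 0, 0, 0, q, 0;
       0, 0, 0, 0, 0, q;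
       0, 0, 1, 0, q - 1, 0;
       0, 0, 0, 1, 0, q - 1],
    !![0, 0, q, 0, 0, 0;
       0, 0, 0, q, 0, 0;
       1, 0, q - 1, 0, 0, 0;
       0, 1, 0, q - 1, 0, 0;
       0, 0, 0, 0, 0, q;
       0, 0, 0, 0, 1, q - 1]]

/-- The matrices of `T, T⁻¹, S₁, S₂` on the standard module with parameters `y`, in the basis of
`tMatrix`; here `qi` and `ci` stand for `q⁻¹` and `(y₁y₂y₃)⁻¹`. -/
def genMatrix (q qi ci : R) (y : Fin 3 → R) : Fin 4 → Matrix (Fin 6) (Fin 6) R :=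
  ![tMatrix q qi y, ci • (tMatrix q qi y * tMatrix q qi y), sMatrix q 0, sMatrix q 1]

/-- The matrix of the intertwining operator from the standard module with parameters `y` to the
one in which the `i`-th and `(i + 1)`-st parameters are exchanged. -/
def intertwiner (q : R) (i : Fin 2) (y : Fin 3 → R) : Matrix (Fin 6) (Fin 6) R :=
  ((q - 1) * y i.castSucc) • 1 + (y i.succ - y i.castSucc) • rightSMatrix q i

theorem one_fin_six : (1 : Matrix (Fin 6) (Fin 6) R) =
    !![1, 0, 0, 0, 0, 0;
       0, 1, 0, 0, 0, 0;
       0, 0, 1, 0, 0, 0;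
       0, 0, 0, 1, 0, 0;
       0, 0, 0, 0, 1, 0;
       0, 0, 0, 0, 0, 1] := by
  ext a b
  fin_cases a <;> fin_cases b <;> rfl

theorem tMatrix_mul_self_mul_self {q qi : R} (hq : q * qi = 1) (y : Fin 3 → R) :
    tMatrix q qi y * (tMatrix q qi y * tMatrix q qi y) = (y 0 * y 1 * y 2) • 1 := by
  simp [tMatrix, one_fin_six]
  grind

theorem sMatrix_mul_self (q : R) (i : Fin 2) :
    sMatrix q i * sMatrix q i = (q - 1) • sMatrix q i + q • 1 := by
  fin_cases i <;> simp [sMatrix, one_fin_six] <;> grind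

theorem sMatrix_braid (q : R) :
    sMatrix q 0 * sMatrix q 1 * sMatrix q 0 = sMatrix q 1 * sMatrix q 0 * sMatrix q 1 := by
  simp [sMatrix]
  grind

theorem tMatrix_mul_sMatrix (q qi : R) (y : Fin 3 → R) :
    tMatrix q qi y * sMatrix q 1 = sMatrix q 0 * tMatrix q qi y := by
  simp [sMatrix, tMatrix]
  grind

theorem rightSMatrix_mul_self (q : R) (i : Fin 2) :
    rightSMatrix q i * rightSMatrix q i = (q - 1) • rightSMatrix q i + q • 1 := by
  fin_cases i <;> simp [rightSMatrix, one_fin_six] <;> grind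

theorem commute_rightSMatrix_sMatrix (q : R) (i j : Fin 2) :
    Commute (rightSMatrix q i) (sMatrix q j) := by
  fin_cases i <;> fin_cases j <;> simp [commute_iff_eq, rightSMatrix, sMatrix, mul_comm]

theorem commute_intertwiner_sMatrix (q : R) (i j : Fin 2) (y : Fin 3 → R) :
    Commute (intertwiner q i y) (sMatrix q j) :=
  ((Commute.one_left _).smul_left _).add_left ((commute_rightSMatrix_sMatrix q i j).smul_left _)

theorem intertwiner_mul_tMatrix {q qi : R} (hq : q * qi = 1) (i : Fin 2) (y : Fin 3 → R) :
    intertwiner q i y * tMatrix q qi y =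
      tMatrix q qi (y ∘ Equiv.swap i.castSucc i.succ) * intertwiner q i y := by
  fin_cases i <;>
    simp [intertwiner, add_mul, mul_add, rightSMatrix, tMatrix, Matrix.smul_of,
      Equiv.swap_apply_def] <;> grind

theorem intertwiner_mul_intertwiner (q : R) (i : Fin 2) (y : Fin 3 → R) :
    intertwiner q i (y ∘ Equiv.swap i.castSucc i.succ) * intertwiner q i y =
      ((q * y i.castSucc - y i.succ) * (q * y i.succ - y i.castSucc)) • 1 := by
  simp only [intertwiner, Function.comp_apply, Equiv.swap_apply_left, Equiv.swap_apply_right,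
    add_mul, mul_add, smul_mul_smul_comm, rightSMatrix_mul_self, one_mul, mul_one]
  module

theorem intertwiner_mul_genMatrix {q qi : R} (hq : q * qi = 1) (ci : R) (i : Fin 2)
    (y : Fin 3 → R) (j : Fin 4) :
    intertwiner q i y * genMatrix q qi ci y j =
      genMatrix q qi ci (y ∘ Equiv.swap i.castSucc i.succ) j * intertwiner q i y := by
  have hT := intertwiner_mul_tMatrix hq i y
  fin_cases j
  · exact hT
  · simp only [genMatrix, Fin.mk_one, Matrix.cons_val_one, Matrix.cons_val_zero]
    rw [mul_smul_comm, smul_mul_assoc, ← mul_assoc, hT, mul_assoc, hT, mul_assoc]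
  · exact commute_intertwiner_sMatrix q i 0 y
  · exact commute_intertwiner_sMatrix q i 1 y

theorem map_genMatrix (φ : R →+* S) (q qi ci : R) (y : Fin 3 → R) (i : Fin 4) :
    φ.mapMatrix (genMatrix q qi ci y i) = genMatrix (φ q) (φ qi) (φ ci) (φ ∘ y) i := by
  have hT : φ.mapMatrix (tMatrix q qi y) = tMatrix (φ q) (φ qi) (φ ∘ y) := by
    ext a b
    fin_cases a <;> fin_cases b <;> simp [tMatrix]
  have hS (j : Fin 2) : φ.mapMatrix (sMatrix q j) = sMatrix (φ q) j := by
    ext a b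
    fin_cases j <;> fin_cases a <;> fin_cases b <;> simp [sMatrix]
  fin_cases i
  · exact hT
  · simp only [genMatrix, Fin.mk_one, Matrix.cons_val_one, Matrix.cons_val_zero, ← hT, ← map_mul]
    exact Matrix.map_smul' φ ci _ (map_mul φ)
  · exact hS 0
  · exact hS 1

section Symmetry

open MvPolynomial

variable [IsDomain R]

theorem C_mul_X_sub_X_ne_zero {ι : Type*} (q : R) {i j : ι} (hij : i ≠ j) :
    (C q * X i - X j : MvPolynomial ι R) ≠ 0 := fun h ↦ by
  classical simpa [hij] using congrArg (eval (Pi.single j 1)) h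

theorem det_intertwiner_X_ne_zero (q : R) (i : Fin 2) :
    (intertwiner (C q) i (X : Fin 3 → MvPolynomial (Fin 3) R)).det ≠ 0 := fun h ↦ by
  have h_det := congrArg Matrix.det (intertwiner_mul_intertwiner (C q) i
    (X : Fin 3 → MvPolynomial (Fin 3) R))
  rw [Matrix.det_mul, h, mul_zero, Matrix.det_smul, Matrix.det_one, mul_one] at h_det
  have hi : i.castSucc ≠ i.succ := Fin.castSucc_lt_succ.ne
  exact pow_ne_zero _ (mul_ne_zero (C_mul_X_sub_X_ne_zero q hi) (C_mul_X_sub_X_ne_zero q hi.symm))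
    h_det.symm

/- The intertwiner may be singular at `y`, so the identity is proved for independent parameters
and then specialized. -/
theorem genericDet_genMatrix_swap {q qi : R} (hq : q * qi = 1) (ci : R) (i : Fin 2)
    (y : Fin 3 → R) (s : Finset (FreeMonoid (Fin 4))) :
    genericDet (genMatrix q qi ci y) s =
      genericDet (genMatrix q qi ci (y ∘ Equiv.swap i.castSucc i.succ)) s := by
  have h_generic := genericDet_eq_of_intertwining (det_intertwiner_X_ne_zero q i)
    (intertwiner_mul_genMatrix (by rw [← C_mul, hq, C_1]) (C ci) i X) s
  have h_eval := congrArg (map (eval y)) h_generic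
  have h_X : eval y ∘ X = y := funext (eval_X ·)
  simpa only [map_genericDet, map_genMatrix, eval_C, ← Function.comp_assoc, h_X] using h_eval

theorem genericDet_genMatrix_perm {q qi : R} (hq : q * qi = 1) (ci : R) (σ : Equiv.Perm (Fin 3))
    (y : Fin 3 → R) (s : Finset (FreeMonoid (Fin 4))) :
    genericDet (genMatrix q qi ci y) s = genericDet (genMatrix q qi ci (y ∘ σ)) s := by
  have hσ : σ ∈ Submonoid.closure (Set.range fun i : Fin 2 ↦ Equiv.swap i.castSucc i.succ) := by
    rw [Equiv.Perm.mclosure_swap_castSucc_succ]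
    exact Submonoid.mem_top σ
  induction hσ using Submonoid.closure_induction generalizing y with
  | mem _ h =>
    obtain ⟨i, rfl⟩ := h
    exact genericDet_genMatrix_swap hq ci i y s
  | one => rfl
  | mul σ τ _ _ hσ hτ => rw [hσ, hτ, Equiv.Perm.coe_mul, Function.comp_assoc]

end Symmetry

end StandardMatrices

namespace HeckeAlg

section Relations

variable {R S : Type} [CommRing R] [CommRing S] {q : R}

@[elab_as_elim]
theorem induction {motive : HeckeAlg R q → Prop}
    (algebraMap : ∀ c, motive (algebraMap R _ c)) (gen : ∀ i, motive (gen R q i))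
    (add : ∀ a b, motive a → motive b → motive (a + b))
    (mul : ∀ a b, motive a → motive b → motive (a * b)) (a : HeckeAlg R q) : motive a := by
  obtain ⟨x, rfl⟩ := RingQuot.mkAlgHom_surjective R (HeckeRel R q) a
  induction x using FreeAlgebra.induction with
  | grade0 c => rw [AlgHom.commutes]; exact algebraMap c
  | grade1 i => exact gen i
  | mul x y hx hy => rw [map_mul]; exact mul _ _ hx hy
  | add x y hx hy => rw [map_add]; exact add _ _ hx hy

theorem map_gen (φ : R →+* S) {q' : S} (h : φ q = q') (i : Fin 4) :
    map φ q q' h (gen R q i) = gen S q' i := by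
  subst h
  let _ : Algebra R (HeckeAlg S (φ q)) :=
    RingHom.toAlgebra' ((algebraMap S (HeckeAlg S (φ q))).comp φ)
      (fun c x ↦ by simpa using Algebra.commutes (φ c) x)
  rw [map, gen, ← AlgHom.coe_toRingHom (RingQuot.mkAlgHom R (HeckeRel R q)),
    RingQuot.mkAlgHom_coe]
  exact (RingQuot.lift_mkRingHom_apply _ _ _).trans (FreeAlgebra.lift_ι_apply _ _)

theorem map_algebraMap (φ : R →+* S) {q' : S} (h : φ q = q') (c : R) :
    map φ q q' h (algebraMap R _ c) = algebraMap S _ (φ c) := by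
  subst h
  let _ : Algebra R (HeckeAlg S (φ q)) :=
    RingHom.toAlgebra' ((algebraMap S (HeckeAlg S (φ q))).comp φ)
      (fun c x ↦ by simpa using Algebra.commutes (φ c) x)
  rw [← (RingQuot.mkAlgHom R (HeckeRel R q)).commutes c, map,
    ← AlgHom.coe_toRingHom (RingQuot.mkAlgHom R (HeckeRel R q)), RingQuot.mkAlgHom_coe]
  exact (RingQuot.lift_mkRingHom_apply _ _ _).trans (AlgHom.commutes _ c)

theorem S2_quad_rel : (S2 R q + 1) * (S2 R q - algebraMap R (HeckeAlg R q) q) = 0 := by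
  have h_add : T R q * (S2 R q + 1) = (S1 R q + 1) * T R q := by
    rw [mul_add, add_mul, T_mul_S2, mul_one, one_mul]
  have h_sub : T R q * (S2 R q - algebraMap R _ q) = (S1 R q - algebraMap R _ q) * T R q := by
    rw [mul_sub, sub_mul, T_mul_S2, Algebra.commutes]
  calc (S2 R q + 1) * (S2 R q - algebraMap R _ q)
      = Tinv R q * (T R q * (S2 R q + 1)) * (S2 R q - algebraMap R _ q) := by
        rw [← mul_assoc (Tinv R q), Tinv_mul_T, one_mul]
    _ = Tinv R q * ((S1 R q + 1) * (S1 R q - algebraMap R _ q)) * T R q := by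
        rw [h_add, mul_assoc, mul_assoc, h_sub]
        simp only [mul_assoc]
    _ = 0 := by rw [quad_rel, mul_zero, zero_mul]

theorem commute_quadInv {A : Type*} [Ring A] [Algebra R A] (x : A) (r s : R) :
    Commute x (algebraMap R A r * (x - algebraMap R A s + 1)) :=
  .mul_right (Algebra.commute_algebraMap_right r x)
    (.add_right (.sub_right rfl (Algebra.commute_algebraMap_right s x)) (.one_right x))

theorem mul_quadInv {A : Type*} [Ring A] [Algebra R A] {x : A} {qi : R} (hq : q * qi = 1)
    (hx : (x + 1) * (x - algebraMap R A q) = 0) :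
    x * (algebraMap R A qi * (x - algebraMap R A q + 1)) = 1 := by
  have h_quad : x * (x - algebraMap R A q + 1) = algebraMap R A q := by
    rw [← sub_eq_zero, ← hx]
    noncomm_ring
  rw [← mul_assoc, ← Algebra.commutes, mul_assoc, h_quad, ← map_mul, mul_comm, hq, map_one]

theorem S1_mul_S1i {qi : R} (hq : q * qi = 1) : S1 R q * S1i R q qi = 1 :=
  mul_quadInv hq (quad_rel R q)

theorem S1i_mul_S1 {qi : R} (hq : q * qi = 1) : S1i R q qi * S1 R q = 1 :=
  (commute_quadInv _ _ _).eq.symm.trans (S1_mul_S1i hq)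

theorem S2_mul_S2i {qi : R} (hq : q * qi = 1) : S2 R q * S2i R q qi = 1 :=
  mul_quadInv hq S2_quad_rel

theorem S2i_mul_S2 {qi : R} (hq : q * qi = 1) : S2i R q qi * S2 R q = 1 :=
  (commute_quadInv _ _ _).eq.symm.trans (S2_mul_S2i hq)

end Relations

section Representations

variable {R : Type} [CommRing R] {q qi : R} {M N : Type*} [AddCommGroup M] [Module R M]
  [AddCommGroup N] [Module R N]

theorem apply_apply_of_quad (f : Module.End R M)
    (hf : (f + 1) * (f - algebraMap R _ q) = 0) (x : M) : f (f x) = q • x + (q - 1) • f x := by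
  have h := LinearMap.congr_fun hf x
  simp only [Module.End.mul_apply, LinearMap.add_apply, LinearMap.sub_apply, Module.End.one_apply,
    Module.algebraMap_end_apply, map_sub, map_smul, LinearMap.zero_apply] at h
  rw [← sub_eq_zero, ← h]
  module

variable (ρ : HeckeAlg R q →ₐ[R] Module.End R M) (x : M)

theorem rho_S1_S1 : ρ (S1 R q) (ρ (S1 R q) x) = q • x + (q - 1) • ρ (S1 R q) x :=
  apply_apply_of_quad _ (by simpa using congrArg ρ (quad_rel R q)) x

theorem rho_S2_S2 : ρ (S2 R q) (ρ (S2 R q) x) = q • x + (q - 1) • ρ (S2 R q) x :=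
  apply_apply_of_quad _ (by simpa using congrArg ρ (S2_quad_rel (q := q))) x

theorem rho_braid : ρ (S2 R q) (ρ (S1 R q) (ρ (S2 R q) x)) =
    ρ (S1 R q) (ρ (S2 R q) (ρ (S1 R q) x)) := by
  simpa using LinearMap.congr_fun (congrArg ρ (braid_rel R q)).symm x

theorem rho_T_S2 : ρ (T R q) (ρ (S2 R q) x) = ρ (S1 R q) (ρ (T R q) x) := by
  simpa using LinearMap.congr_fun (congrArg ρ (T_mul_S2 R q)) x

variable {ρ x}

theorem rho_S1i_eq_iff (hq : q * qi = 1) {z : M} :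
    ρ (S1i R q qi) x = z ↔ x = ρ (S1 R q) z := by
  have h := LinearMap.congr_fun (congrArg ρ (S1_mul_S1i hq)) x
  have h' := LinearMap.congr_fun (congrArg ρ (S1i_mul_S1 hq)) z
  simp only [map_mul, Module.End.mul_apply, map_one, Module.End.one_apply] at h h'
  exact ⟨fun e ↦ by rw [← e, h], fun e ↦ by rw [e, h']⟩

theorem rho_S2i_eq_iff (hq : q * qi = 1) {z : M} :
    ρ (S2i R q qi) x = z ↔ x = ρ (S2 R q) z := by
  have h := LinearMap.congr_fun (congrArg ρ (S2_mul_S2i hq)) x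
  have h' := LinearMap.congr_fun (congrArg ρ (S2i_mul_S2 hq)) z
  simp only [map_mul, Module.End.mul_apply, map_one, Module.End.one_apply] at h h'
  exact ⟨fun e ↦ by rw [← e, h], fun e ↦ by rw [e, h']⟩

theorem smul_eq_iff_of_mul_eq_one (hq : q * qi = 1) {z : M} : q • x = z ↔ x = qi • z :=
  ⟨fun e ↦ by rw [← e, smul_smul, mul_comm, hq, one_smul],
    fun e ↦ by rw [e, smul_smul, hq, one_smul]⟩

theorem rho_Y_zero_eq_iff (hq : q * qi = 1) {c : R} : ρ (Y R q qi 0) x = c • x ↔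
    ρ (T R q) x = (qi * c) • ρ (S2 R q) (ρ (S1 R q) x) := by
  simp only [Y, Matrix.cons_val_zero, map_mul, AlgHom.commutes, Module.End.mul_apply,
    Module.algebraMap_end_apply]
  rw [smul_eq_iff_of_mul_eq_one hq, rho_S1i_eq_iff hq, rho_S2i_eq_iff hq, map_smul, map_smul,
    map_smul, map_smul, smul_smul]

theorem rho_Y_one_eq_iff (hq : q * qi = 1) {c : R} : ρ (Y R q qi 1) x = c • x ↔
    ρ (T R q) (ρ (S1 R q) x) = c • ρ (S2 R q) x := by
  simp only [Y, Matrix.cons_val_zero, Matrix.cons_val_one, map_mul, Module.End.mul_apply]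
  rw [rho_S2i_eq_iff hq, map_smul]

theorem rho_Y_two_eq_iff (hq : q * qi = 1) {c : R} : ρ (Y R q qi 2) x = c • x ↔
    ρ (T R q) (ρ (S1 R q) (ρ (S2 R q) x)) = (q * c) • x := by
  simp only [Y, Matrix.cons_val, map_mul, AlgHom.commutes, Module.End.mul_apply,
    Module.algebraMap_end_apply]
  rw [smul_eq_iff_of_mul_eq_one ((mul_comm _ _).trans hq), smul_smul]

/-- A joint eigenvector of the Bernstein elements `Y₁, Y₂, Y₃` with eigenvalues `y`. -/
def IsBernsteinEigenvector (qi : R) (ρ : HeckeAlg R q →ₐ[R] Module.End R M) (y : Fin 3 → R)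
    (x : M) : Prop :=
  ∀ i, ρ (Y R q qi i) x = y i • x

/-- The vectors `S_w x` for `w = 1, s₁, s₂, s₁s₂, s₂s₁, s₁s₂s₁`. -/
noncomputable def weylVectors (ρ : HeckeAlg R q →ₐ[R] Module.End R M) (x : M) : Fin 6 → M :=
  ![x, ρ (S1 R q) x, ρ (S2 R q) x, ρ (S1 R q) (ρ (S2 R q) x), ρ (S2 R q) (ρ (S1 R q) x),
    ρ (S1 R q) (ρ (S2 R q) (ρ (S1 R q) x))]

theorem rho_S1_weylVectors (w : Fin 6) :
    ρ (S1 R q) (weylVectors ρ x w) = ∑ l, sMatrix q 0 l w • weylVectors ρ x l := by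
  fin_cases w <;> simp [weylVectors, sMatrix, Fin.sum_univ_six, rho_S1_S1]

theorem rho_S2_weylVectors (w : Fin 6) :
    ρ (S2 R q) (weylVectors ρ x w) = ∑ l, sMatrix q 1 l w • weylVectors ρ x l := by
  fin_cases w <;> simp [weylVectors, sMatrix, Fin.sum_univ_six, rho_S2_S2, ← rho_braid]

theorem IsBernsteinEigenvector.rho_T_weylVectors (hq : q * qi = 1) {y : Fin 3 → R}
    (hx : IsBernsteinEigenvector qi ρ y x) (w : Fin 6) :
    ρ (T R q) (weylVectors ρ x w) = ∑ l, tMatrix q qi y l w • weylVectors ρ x l := by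
  have h_zero := (rho_Y_zero_eq_iff hq).1 (hx 0)
  have h_one := (rho_Y_one_eq_iff hq).1 (hx 1)
  have h_two := (rho_Y_two_eq_iff hq).1 (hx 2)
  fin_cases w <;>
    simp [weylVectors, tMatrix, Fin.sum_univ_six, rho_T_S2, ← rho_braid, h_zero, h_one, h_two]

/-- The linear map sending the standard basis of `R⁶` to the vectors `S_w x`. -/
noncomputable def weylMap (ρ : HeckeAlg R q →ₐ[R] Module.End R M) (x : M) :
    (Fin 6 → R) →ₗ[R] M :=
  Fintype.linearCombination R (weylVectors ρ x)

theorem weylMap_single (w : Fin 6) : weylMap ρ x (Pi.single w 1) = weylVectors ρ x w :=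
  (Fintype.linearCombination_apply_single R _ w 1).trans (one_smul R _)

theorem comp_weylMap_eq {f : Module.End R M} {A : Matrix (Fin 6) (Fin 6) R}
    (hf : ∀ w, f (weylVectors ρ x w) = ∑ l, A l w • weylVectors ρ x l) :
    f ∘ₗ weylMap ρ x = weylMap ρ x ∘ₗ A.toLin' := by
  refine (Pi.basisFun R (Fin 6)).ext fun w ↦ ?_
  simp [weylMap, Fintype.linearCombination_apply, hf, Pi.single_apply]

theorem map_weylVectors {ρ : HeckeAlg R q →ₐ[R] Module.End R M}
    {ρ' : HeckeAlg R q →ₐ[R] Module.End R N} {f : M →ₗ[R] N}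
    (hf : ∀ a, ρ' a ∘ₗ f = f ∘ₗ ρ a) (x : M) (w : Fin 6) :
    f (weylVectors ρ x w) = weylVectors ρ' (f x) w := by
  have h_apply (a : HeckeAlg R q) (z : M) : f (ρ a z) = ρ' a (f z) :=
    LinearMap.congr_fun (hf a).symm z
  fin_cases w <;> simp [weylVectors, h_apply]

theorem comp_eq_comp_of_generators {ρ : HeckeAlg R q →ₐ[R] Module.End R M}
    {ρ' : HeckeAlg R q →ₐ[R] Module.End R N} {f : M →ₗ[R] N}
    (hT : ρ' (T R q) ∘ₗ f = f ∘ₗ ρ (T R q)) (hS1 : ρ' (S1 R q) ∘ₗ f = f ∘ₗ ρ (S1 R q))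
    (hS2 : ρ' (S2 R q) ∘ₗ f = f ∘ₗ ρ (S2 R q)) (a : HeckeAlg R q) :
    ρ' a ∘ₗ f = f ∘ₗ ρ a := by
  induction a using induction with
  | algebraMap c => ext; simp
  | gen i =>
    fin_cases i
    · exact hT
    · have h_left : ρ' (Tinv R q) ∘ₗ ρ' (T R q) = LinearMap.id := by
        rw [← Module.End.mul_eq_comp, ← map_mul, Tinv_mul_T, map_one, Module.End.one_eq_id]
      have h_right : ρ (T R q) ∘ₗ ρ (Tinv R q) = LinearMap.id := by
        rw [← Module.End.mul_eq_comp, ← map_mul, T_mul_Tinv, map_one, Module.End.one_eq_id]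
      calc ρ' (Tinv R q) ∘ₗ f = ρ' (Tinv R q) ∘ₗ (f ∘ₗ ρ (T R q)) ∘ₗ ρ (Tinv R q) := by
            rw [LinearMap.comp_assoc, h_right, LinearMap.comp_id]
        _ = f ∘ₗ ρ (Tinv R q) := by
            rw [← hT, LinearMap.comp_assoc, ← LinearMap.comp_assoc, h_left, LinearMap.id_comp]
    · exact hS1
    · exact hS2
  | add a b ha hb => rw [map_add, map_add, LinearMap.add_comp, LinearMap.comp_add, ha, hb]
  | mul a b ha hb =>
    rw [map_mul, map_mul, Module.End.mul_eq_comp, Module.End.mul_eq_comp, LinearMap.comp_assoc, hb,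
      ← LinearMap.comp_assoc, ha, LinearMap.comp_assoc]

end Representations

section StandardRepresentation

variable {R : Type} [CommRing R] {q qi ci : R} {y : Fin 3 → R} {M : Type*} [AddCommGroup M]
  [Module R M]

theorem exists_algHom_gen_eq_genMatrix (hq : q * qi = 1) (hci : ci * (y 0 * y 1 * y 2) = 1) :
    ∃ φ : HeckeAlg R q →ₐ[R] Matrix (Fin 6) (Fin 6) R,
      ∀ i, φ (gen R q i) = genMatrix q qi ci y i := by
  have h_cube := tMatrix_mul_self_mul_self hq y
  have h_rel ⦃a b : FreeAlgebra R (Fin 4)⦄ (h : HeckeRel R q a b) :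
      FreeAlgebra.lift R (genMatrix q qi ci y) a = FreeAlgebra.lift R (genMatrix q qi ci y) b := by
    cases h <;>
      simp only [map_mul, map_pow, map_add, map_sub, map_one, map_zero, AlgHom.commutes,
        FreeAlgebra.lift_ι_apply, genMatrix, Matrix.cons_val]
    case TTinv => rw [mul_smul_comm, h_cube, smul_smul, hci, one_smul]
    case TinvT => rw [smul_mul_assoc, mul_assoc, h_cube, smul_smul, hci, one_smul]
    case quad =>
      rw [Algebra.algebraMap_eq_smul_one, add_mul, mul_sub, sMatrix_mul_self, one_mul,
        mul_smul_comm, mul_one]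
      module
    case T3S1 => rw [pow_succ', pow_two, h_cube, smul_mul_assoc, mul_smul_comm, one_mul, mul_one]
    case braid => exact sMatrix_braid q
    case TS2 => exact tMatrix_mul_sMatrix q qi y
  exact ⟨RingQuot.liftAlgHom R ⟨FreeAlgebra.lift R (genMatrix q qi ci y), h_rel⟩, fun i ↦ by
    rw [gen, RingQuot.liftAlgHom_mkAlgHom_apply, FreeAlgebra.lift_ι_apply]⟩

/-- The standard module with parameters `y`, realized on `R⁶` through the matrices `genMatrix`. -/
noncomputable def stdRep (hq : q * qi = 1) (hci : ci * (y 0 * y 1 * y 2) = 1) :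
    HeckeAlg R q →ₐ[R] Module.End R (Fin 6 → R) :=
  Matrix.toLinAlgEquiv'.toAlgHom.comp (exists_algHom_gen_eq_genMatrix hq hci).choose

theorem stdRep_gen (hq : q * qi = 1) (hci : ci * (y 0 * y 1 * y 2) = 1) (i : Fin 4) :
    stdRep hq hci (gen R q i) = (genMatrix q qi ci y i).toLin' :=
  congrArg Matrix.toLinAlgEquiv' ((exists_algHom_gen_eq_genMatrix hq hci).choose_spec i)

theorem stdRep_T_single (hq : q * qi = 1) (hci : ci * (y 0 * y 1 * y 2) = 1) (w : Fin 6) :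
    stdRep hq hci (T R q) (Pi.single w 1) = (tMatrix q qi y).col w :=
  (LinearMap.congr_fun (stdRep_gen hq hci 0) _).trans
    ((Matrix.toLin'_apply _ _).trans (Matrix.mulVec_single_one _ _))

theorem stdRep_S1_single (hq : q * qi = 1) (hci : ci * (y 0 * y 1 * y 2) = 1) (w : Fin 6) :
    stdRep hq hci (S1 R q) (Pi.single w 1) = (sMatrix q 0).col w :=
  (LinearMap.congr_fun (stdRep_gen hq hci 2) _).trans
    ((Matrix.toLin'_apply _ _).trans (Matrix.mulVec_single_one _ _))

theorem stdRep_S2_single (hq : q * qi = 1) (hci : ci * (y 0 * y 1 * y 2) = 1) (w : Fin 6) :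
    stdRep hq hci (S2 R q) (Pi.single w 1) = (sMatrix q 1).col w :=
  (LinearMap.congr_fun (stdRep_gen hq hci 3) _).trans
    ((Matrix.toLin'_apply _ _).trans (Matrix.mulVec_single_one _ _))

theorem weylVectors_stdRep (hq : q * qi = 1) (hci : ci * (y 0 * y 1 * y 2) = 1) :
    weylVectors (stdRep hq hci) (Pi.single 0 1) = fun w ↦ Pi.single w 1 := by
  have h1 {w : Fin 6} := stdRep_S1_single hq hci w
  have h2 {w : Fin 6} := stdRep_S2_single hq hci w
  have h_one : (sMatrix q 0).col 0 = Pi.single 1 1 := by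
    ext i; fin_cases i <;> rfl
  have h_two : (sMatrix q 1).col 0 = Pi.single 2 1 := by
    ext i; fin_cases i <;> rfl
  have h_three : (sMatrix q 0).col 2 = Pi.single 3 1 := by
    ext i; fin_cases i <;> rfl
  have h_four : (sMatrix q 1).col 1 = Pi.single 4 1 := by
    ext i; fin_cases i <;> rfl
  have h_five : (sMatrix q 0).col 4 = Pi.single 5 1 := by
    ext i; fin_cases i <;> rfl
  funext w
  fin_cases w <;> simp [weylVectors, h1, h2, h_one, h_two, h_three, h_four, h_five]

theorem isBernsteinEigenvector_stdRep (hq : q * qi = 1) (hci : ci * (y 0 * y 1 * y 2) = 1) :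
    IsBernsteinEigenvector qi (stdRep hq hci) y (Pi.single 0 1) := by
  have h_weyl := congrFun (weylVectors_stdRep hq hci)
  have h1 : stdRep hq hci (S1 R q) (Pi.single 0 1) = Pi.single 1 1 := h_weyl 1
  have h2 : stdRep hq hci (S2 R q) (Pi.single 0 1) = Pi.single 2 1 := h_weyl 2
  have h12 : stdRep hq hci (S1 R q) (stdRep hq hci (S2 R q) (Pi.single 0 1)) = Pi.single 3 1 :=
    h_weyl 3
  have h21 : stdRep hq hci (S2 R q) (stdRep hq hci (S1 R q) (Pi.single 0 1)) = Pi.single 4 1 :=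
    h_weyl 4
  intro i
  fin_cases i
  · refine (rho_Y_zero_eq_iff hq).2 ?_
    rw [h21, stdRep_T_single]
    ext j
    fin_cases j <;> simp [tMatrix]
  · refine (rho_Y_one_eq_iff hq).2 ?_
    rw [h1, h2, stdRep_T_single]
    ext j
    fin_cases j <;> simp [tMatrix]
  · refine (rho_Y_two_eq_iff hq).2 ?_
    rw [h12, stdRep_T_single]
    ext j
    fin_cases j <;> simp [tMatrix]

theorem IsBernsteinEigenvector.comp_weylMap (hq : q * qi = 1)
    (hci : ci * (y 0 * y 1 * y 2) = 1) {ρ : HeckeAlg R q →ₐ[R] Module.End R M} {x : M}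
    (hx : IsBernsteinEigenvector qi ρ y x) (a : HeckeAlg R q) :
    ρ a ∘ₗ weylMap ρ x = weylMap ρ x ∘ₗ stdRep hq hci a := by
  refine comp_eq_comp_of_generators ?_ ?_ ?_ a
  · exact (comp_weylMap_eq (hx.rho_T_weylVectors hq)).trans
      (congrArg (weylMap ρ x ∘ₗ ·) (stdRep_gen hq hci 0).symm)
  · exact (comp_weylMap_eq rho_S1_weylVectors).trans
      (congrArg (weylMap ρ x ∘ₗ ·) (stdRep_gen hq hci 2).symm)
  · exact (comp_weylMap_eq rho_S2_weylVectors).trans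
      (congrArg (weylMap ρ x ∘ₗ ·) (stdRep_gen hq hci 3).symm)

end StandardRepresentation

end HeckeAlg

section StandardModule

variable {p : ℕ} {E : Type} [Field E] {f : ℕ} {u : Fin 3 → HE p E f}
  {χ : AE p E f u →ₐ[E] E} {M : Type*} [AddCommGroup M] [Module E M]

open HeckeAlg

instance : IsScalarTower E (HE p E f) (StdMod p E f u χ) :=
  inferInstanceAs (IsScalarTower E (HE p E f) (HE p E f ⧸ Jχ p E f u χ))

variable (p E f u χ) in
/-- The action of `H_E` on the standard module `I_A(χ)`, as a representation. -/
def stdModRep : HE p E f →ₐ[E] Module.End E (StdMod p E f u χ) :=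
  Algebra.lsmul E E _

theorem stdModRep_apply (h : HE p E f) (x : StdMod p E f u χ) : stdModRep p E f u χ h x = h • x :=
  rfl

variable (p E f u χ) in
/-- The canonical generator `1 ⊗ 1` of the standard module `I_A(χ)`. -/
def stdGen : StdMod p E f u χ :=
  (Jχ p E f u χ).mkQ 1

theorem mkQ_eq_stdModRep_stdGen (h : HE p E f) :
    (Jχ p E f u χ).mkQ h = stdModRep p E f u χ h (stdGen p E f u χ) :=
  (congrArg _ (mul_one h).symm).trans ((Jχ p E f u χ).mkQ.map_smul h 1)

theorem exists_stdModRep_stdGen_eq (x : StdMod p E f u χ) :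
    ∃ h : HE p E f, stdModRep p E f u χ h (stdGen p E f u χ) = x :=
  ((Jχ p E f u χ).mkQ_surjective x).imp fun h hh ↦ (mkQ_eq_stdModRep_stdGen h).symm.trans hh

theorem isBernsteinEigenvector_stdGen :
    IsBernsteinEigenvector (qE p E f)⁻¹ (stdModRep p E f u χ) (yval p E f u χ)
      (stdGen p E f u χ) := fun i ↦ by
  have h_mem : YE p E f i - algebraMap E _ (yval p E f u χ i) ∈ Jχ p E f u χ :=
    Submodule.subset_span ⟨⟨YE p E f i, _⟩, rfl⟩
  have h_zero : stdModRep p E f u χ (YE p E f i - algebraMap E _ (yval p E f u χ i))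
      (stdGen p E f u χ) = 0 :=
    (mkQ_eq_stdModRep_stdGen _).symm.trans ((Submodule.Quotient.mk_eq_zero _).2 h_mem)
  rwa [map_sub, LinearMap.sub_apply, AlgHom.commutes, Module.algebraMap_end_apply,
    sub_eq_zero] at h_zero

theorem apply_inv_mul_yval {i : Fin 3} (hu : u i * YE p E f i = 1) (hi : u i ∈ AE p E f u) :
    χ ⟨u i, hi⟩ * yval p E f u χ i = 1 := by
  rw [yval, ← map_mul, ← map_one χ]
  exact congrArg χ (Subtype.ext hu)

theorem yval_ne_zero {i : Fin 3} (hu : u i * YE p E f i = 1) : yval p E f u χ i ≠ 0 :=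
  right_ne_zero_of_mul_eq_one
    (apply_inv_mul_yval (χ := χ) hu (Algebra.subset_adjoin (.inr ⟨i, rfl⟩)))

namespace HeckeAlg.IsBernsteinEigenvector

variable {ρ : HE p E f →ₐ[E] Module.End E M} {x : M}

theorem rho_u_eq_smul (hu : ∀ i, u i * YE p E f i = 1)
    (hx : IsBernsteinEigenvector (qE p E f)⁻¹ ρ (yval p E f u χ) x) (i : Fin 3)
    (hi : u i ∈ AE p E f u) : ρ (u i) x = χ ⟨u i, hi⟩ • x := by
  have h_inv : ρ (u i) (ρ (YE p E f i) x) = x := by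
    rw [← Module.End.mul_apply, ← map_mul, hu, map_one, Module.End.one_apply]
  have h_smul : yval p E f u χ i • ρ (u i) x = x := by
    rw [← map_smul, ← hx i]
    exact h_inv
  calc
    ρ (u i) x = (χ ⟨u i, hi⟩ * yval p E f u χ i) • ρ (u i) x := by
      rw [apply_inv_mul_yval (hu i) hi, one_smul]
    _ = χ ⟨u i, hi⟩ • x := by rw [mul_smul, h_smul]

theorem rho_eq_smul (hu : ∀ i, u i * YE p E f i = 1)
    (hx : IsBernsteinEigenvector (qE p E f)⁻¹ ρ (yval p E f u χ) x) (a : AE p E f u) :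
    ρ a x = χ a • x := by
  obtain ⟨a, ha⟩ := a
  induction ha using Algebra.adjoin_induction with
  | mem a ha =>
    obtain ⟨i, rfl⟩ | ⟨i, rfl⟩ := ha
    · exact hx i
    · exact hx.rho_u_eq_smul hu i _
  | algebraMap c =>
    exact (congrArg (· x) (ρ.commutes c)).trans (congrArg (· • x) (χ.commutes c).symm)
  | add a b ha hb iha ihb =>
    rw [map_add, LinearMap.add_apply, iha, ihb, ← add_smul, ← map_add]
    rfl
  | mul a b ha hb iha ihb =>
    rw [map_mul, Module.End.mul_apply, ihb, map_smul, iha, smul_smul, mul_comm, ← map_mul]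
    rfl

theorem rho_eq_zero_of_mem (hu : ∀ i, u i * YE p E f i = 1)
    (hx : IsBernsteinEigenvector (qE p E f)⁻¹ ρ (yval p E f u χ) x) {h : HE p E f}
    (hh : h ∈ Jχ p E f u χ) : ρ h x = 0 := by
  induction hh using Submodule.span_induction with
  | mem h hh =>
    obtain ⟨a, rfl⟩ := hh
    rw [map_sub, LinearMap.sub_apply, hx.rho_eq_smul hu, AlgHom.commutes,
      Module.algebraMap_end_apply, sub_self]
  | zero => rw [map_zero, LinearMap.zero_apply]
  | add a b _ _ ha hb => rw [map_add, LinearMap.add_apply, ha, hb, add_zero]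
  | smul a b _ hb => rw [smul_eq_mul, map_mul, Module.End.mul_apply, hb, map_zero]

/-- Frobenius reciprocity for `I_A(χ) = H_E ⊗_{A_E, χ} E`. -/
theorem exists_linearMap_stdGen_eq (hu : ∀ i, u i * YE p E f i = 1)
    (hx : IsBernsteinEigenvector (qE p E f)⁻¹ ρ (yval p E f u χ) x) :
    ∃ Ψ : StdMod p E f u χ →ₗ[E] M, Ψ (stdGen p E f u χ) = x ∧
      ∀ a, ρ a ∘ₗ Ψ = Ψ ∘ₗ stdModRep p E f u χ a := by
  let evalMap : HE p E f →ₗ[E] M := LinearMap.applyₗ x ∘ₗ ρ.toLinearMap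
  have h_ker : (Jχ p E f u χ).restrictScalars E ≤ evalMap.ker := fun h hh ↦
    hx.rho_eq_zero_of_mem hu hh
  let Ψ : StdMod p E f u χ →ₗ[E] M := ((Jχ p E f u χ).restrictScalars E).liftQ evalMap h_ker ∘ₗ
    (Submodule.Quotient.restrictScalarsEquiv E (Jχ p E f u χ)).symm.toLinearMap
  have h_apply (h : HE p E f) : Ψ (stdModRep p E f u χ h (stdGen p E f u χ)) = ρ h x :=
    congrArg Ψ (mkQ_eq_stdModRep_stdGen h).symm
  have h_gen : Ψ (stdGen p E f u χ) = x := by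
    simpa only [map_one, Module.End.one_apply] using h_apply 1
  refine ⟨Ψ, h_gen, fun a ↦ LinearMap.ext fun z ↦ ?_⟩
  obtain ⟨h, rfl⟩ := exists_stdModRep_stdGen_eq z
  rw [LinearMap.comp_apply, LinearMap.comp_apply, h_apply, ← Module.End.mul_apply,
    ← Module.End.mul_apply, ← map_mul, ← map_mul, h_apply]

end HeckeAlg.IsBernsteinEigenvector

theorem stdModRep_linearMap_ext {g g' : StdMod p E f u χ →ₗ[E] M}
    {ρ : HE p E f →ₐ[E] Module.End E M} (hg : ∀ a, ρ a ∘ₗ g = g ∘ₗ stdModRep p E f u χ a)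
    (hg' : ∀ a, ρ a ∘ₗ g' = g' ∘ₗ stdModRep p E f u χ a)
    (h : g (stdGen p E f u χ) = g' (stdGen p E f u χ)) : g = g' := by
  ext z
  obtain ⟨a, rfl⟩ := exists_stdModRep_stdGen_eq z
  rw [← LinearMap.comp_apply, ← hg, ← LinearMap.comp_apply, ← hg', LinearMap.comp_apply,
    LinearMap.comp_apply, h]

theorem exists_linearEquiv_stdMod (hu : ∀ i, u i * YE p E f i = 1)
    (hq : qE p E f * (qE p E f)⁻¹ = 1) {ci : E}
    (hci : ci * (yval p E f u χ 0 * yval p E f u χ 1 * yval p E f u χ 2) = 1) :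
    ∃ e : (Fin 6 → E) ≃ₗ[E] StdMod p E f u χ,
      ∀ a, stdModRep p E f u χ a ∘ₗ e = e ∘ₗ stdRep hq hci a := by
  obtain ⟨Ψ, hΨ_gen, hΨ⟩ :=
    (isBernsteinEigenvector_stdRep hq hci).exists_linearMap_stdGen_eq hu
  let Φ : (Fin 6 → E) →ₗ[E] StdMod p E f u χ :=
    weylMap (stdModRep p E f u χ) (stdGen p E f u χ)
  have hΦ (a : HE p E f) : stdModRep p E f u χ a ∘ₗ Φ = Φ ∘ₗ stdRep hq hci a :=
    isBernsteinEigenvector_stdGen.comp_weylMap hq hci a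
  have hΨΦ : Ψ ∘ₗ Φ = LinearMap.id := (Pi.basisFun E (Fin 6)).ext fun w ↦ by
    rw [LinearMap.comp_apply, Pi.basisFun_apply, weylMap_single, map_weylVectors hΨ, hΨ_gen,
      weylVectors_stdRep, LinearMap.id_apply]
  have hΦΨ : Φ ∘ₗ Ψ = LinearMap.id := by
    refine stdModRep_linearMap_ext (ρ := stdModRep p E f u χ) (fun a ↦ ?_) (fun a ↦ rfl) ?_
    · rw [← LinearMap.comp_assoc, hΦ, LinearMap.comp_assoc, hΨ, LinearMap.comp_assoc]
    · rw [LinearMap.comp_apply, hΨ_gen, weylMap_single, LinearMap.id_apply]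
      rfl
  exact ⟨.ofLinearMap Φ Ψ hΦΨ hΨΦ, hΦ⟩

end StandardModule

section RingOfIntegers

variable {p : ℕ} [Fact p.Prime] {E : Type} [Field E]

theorem qE_ne_zero [CharZero E] (f : ℕ) : qE p E f ≠ 0 :=
  pow_ne_zero _ (Nat.cast_ne_zero.2 (NeZero.ne p))

variable [Algebra ℤ_[p] E]

theorem qE_mem_OE (f : ℕ) : qE p E f ∈ OE p E :=
  pow_mem (natCast_mem _ p) _

theorem eval₂_qE_mem_OE (f : ℕ) (P : Polynomial ℤ) :
    P.eval₂ (Int.castRingHom E) (qE p E f) ∈ OE p E := by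
  rw [Polynomial.eval₂_eq_sum]
  exact sum_mem fun n _ ↦ mul_mem (intCast_mem _ _) (pow_mem (qE_mem_OE f) n)

theorem IntCond.comp_perm {f : ℕ} {y : Fin 3 → Eˣ} (hy : IntCond p E f y)
    (σ : Equiv.Perm (Fin 3)) : IntCond p E f (y ∘ σ) := by
  have h_prod : (y ∘ σ) 0 * (y ∘ σ) 1 * (y ∘ σ) 2 = y 0 * y 1 * y 2 := by
    simpa only [Fin.prod_univ_three, Function.comp_apply] using Equiv.prod_comp σ y
  exact ⟨h_prod ▸ hy.1, h_prod ▸ hy.2.1, fun i j hij ↦ hy.2.2 _ _ (σ.injective.ne hij)⟩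

variable [Algebra ℚ_[p] E] [FiniteDimensional ℚ_[p] E] [IsScalarTower ℤ_[p] ℚ_[p] E]

theorem mem_OE_of_spectralNorm_le_one {x : E} (hx : spectralNorm ℚ_[p] E x ≤ 1) : x ∈ OE p E := by
  have h_monic : (minpoly ℚ_[p] x).Monic := minpoly.monic (Algebra.IsIntegral.isIntegral x)
  have h_coeff := (spectralValue_le_one_iff h_monic).1 hx
  have h_lifts : minpoly ℚ_[p] x ∈ Polynomial.lifts (algebraMap ℤ_[p] ℚ_[p]) :=
    (Polynomial.lifts_iff_coeff_lifts _).2 fun n ↦ ⟨⟨_, h_coeff n⟩, rfl⟩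
  obtain ⟨P, hP, -, hP_monic⟩ := Polynomial.lifts_and_natDegree_eq_and_monic h_lifts h_monic
  refine ⟨P, hP_monic, ?_⟩
  rw [← Polynomial.aeval_def, ← Polynomial.aeval_map_algebraMap ℚ_[p], hP, minpoly.aeval]

theorem mem_OE_or_inv_mem_OE (x : E) : x ∈ OE p E ∨ x⁻¹ ∈ OE p E := by
  obtain rfl | hx := eq_or_ne x 0
  · exact .inl (zero_mem _)
  have h_mul : spectralNorm ℚ_[p] E x * spectralNorm ℚ_[p] E x⁻¹ = 1 := by
    have h := map_mul (spectralMulAlgNorm ℚ_[p] E) x x⁻¹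
    rw [mul_inv_cancel₀ hx, map_one] at h
    exact h.symm
  refine (le_total (spectralNorm ℚ_[p] E x) 1).imp mem_OE_of_spectralNorm_le_one fun h ↦ ?_
  exact mem_OE_of_spectralNorm_le_one (by nlinarith [spectralNorm_nonneg (K := ℚ_[p]) x⁻¹])

theorem exists_forall_mul_inv_mem_OE {ι : Type*} [Finite ι] [Nonempty ι] (a : ι → E) :
    ∃ k, ∀ i, a i * (a k)⁻¹ ∈ OE p E := by
  let O : ValuationSubring E := ⟨(OE p E).toSubring, mem_OE_or_inv_mem_OE⟩
  obtain ⟨k, hk⟩ := Finite.exists_max fun i ↦ O.valuation (a i)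
  refine ⟨k, fun i ↦ (O.valuation_le_one_iff _).1 ?_⟩
  rw [map_mul, map_inv₀]
  exact mul_inv_le_one_of_le₀ (hk i) zero_le

end RingOfIntegers

section Rescaling

variable {K : Type*} [Field K]

/-- The factors by which the basis of `tMatrix` is rescaled. They are chosen such that `T` permutes
the rescaled basis vectors up to factors `y₁y₂y₃`, which leaves `t` as the only free parameter. -/
def scaling (q t : K) (y : Fin 3 → K) : Fin 6 → K :=
  ![1, t, t * y 1, y 0 * y 1 * q⁻¹, y 0 * q⁻¹, t * y 1 * y 0 * q⁻¹]

theorem scaling_ne_zero {q t : K} {y : Fin 3 → K} (hq : q ≠ 0) (ht : t ≠ 0) (hy : ∀ i, y i ≠ 0)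
    (w : Fin 6) : scaling q t y w ≠ 0 := by
  fin_cases w <;> simp [scaling, hq, ht, hy]

/-- The matrix of `T` in the rescaled basis, where `c = y₁y₂y₃`. -/
def scaledTMatrix (c : K) : Matrix (Fin 6) (Fin 6) K :=
  !![0, 0, 0, c, 0, 0;
     0, 0, 0, 0, 0, c;
     0, 1, 0, 0, 0, 0;
     0, 0, 0, 0, 1, 0;
     1, 0, 0, 0, 0, 0;
     0, 0, 1, 0, 0, 0]

/-- The matrices of `S₁` and `S₂` in the rescaled basis. -/
def scaledSMatrix (q t : K) (y : Fin 3 → K) : Fin 2 → Matrix (Fin 6) (Fin 6) K :=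
  ![!![0, q * t, 0, 0, 0, 0;
       t⁻¹, q - 1, 0, 0, 0, 0;
       0, 0, 0, y 0 * t⁻¹, 0, 0;
       0, 0, q * t * (y 0)⁻¹, q - 1, 0, 0;
       0, 0, 0, 0, 0, q * t * y 1;
       0, 0, 0, 0, (y 1)⁻¹ * t⁻¹, q - 1],
    !![0, 0, q * t * y 1, 0, 0, 0;
       0, 0, 0, 0, y 0 * t⁻¹, 0;
       (y 1)⁻¹ * t⁻¹, 0, q - 1, 0, 0, 0;
       0, 0, 0, 0, 0, q * t;
       0, q * t * (y 0)⁻¹, 0, 0, q - 1, 0;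
       0, 0, 0, t⁻¹, 0, q - 1]]

/-- The matrices of `T, T⁻¹, S₁, S₂` in the rescaled basis, where `c = y₁y₂y₃`. -/
def scaledGenMatrix (q t c : K) (y : Fin 3 → K) : Fin 4 → Matrix (Fin 6) (Fin 6) K :=
  ![scaledTMatrix c, c⁻¹ • (scaledTMatrix c * scaledTMatrix c), scaledSMatrix q t y 0,
    scaledSMatrix q t y 1]

theorem tMatrix_mul_diagonal_scaling {q : K} (hq : q ≠ 0) (t : K) (y : Fin 3 → K) :
    tMatrix q q⁻¹ y * .diagonal (scaling q t y) =
      .diagonal (scaling q t y) * scaledTMatrix (y 0 * y 1 * y 2) := by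
  ext l w
  rw [Matrix.mul_diagonal, Matrix.diagonal_mul]
  fin_cases l <;> fin_cases w <;> simp [tMatrix, scaledTMatrix, scaling] <;> field_simp

theorem sMatrix_mul_diagonal_scaling {q t : K} {y : Fin 3 → K} (hq : q ≠ 0) (ht : t ≠ 0)
    (hy : ∀ i, y i ≠ 0) (i : Fin 2) :
    sMatrix q i * .diagonal (scaling q t y) =
      .diagonal (scaling q t y) * scaledSMatrix q t y i := by
  have h0 := hy 0
  have h1 := hy 1
  ext l w
  rw [Matrix.mul_diagonal, Matrix.diagonal_mul]
  fin_cases i <;> fin_cases l <;> fin_cases w <;> simp [sMatrix, scaledSMatrix, scaling] <;>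
    field_simp

theorem genMatrix_mul_diagonal_scaling {q t : K} {y : Fin 3 → K} (hq : q ≠ 0) (ht : t ≠ 0)
    (hy : ∀ i, y i ≠ 0) (i : Fin 4) :
    genMatrix q q⁻¹ (y 0 * y 1 * y 2)⁻¹ y i * .diagonal (scaling q t y) =
      .diagonal (scaling q t y) * scaledGenMatrix q t (y 0 * y 1 * y 2) y i := by
  have hT := tMatrix_mul_diagonal_scaling hq t y
  fin_cases i
  · exact hT
  · refine (smul_mul_assoc _ _ _).trans (.trans ?_ (mul_smul_comm _ _ _).symm)
    rw [Matrix.mul_assoc, hT, ← Matrix.mul_assoc, hT, Matrix.mul_assoc]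
  · exact sMatrix_mul_diagonal_scaling hq ht hy 0
  · exact sMatrix_mul_diagonal_scaling hq ht hy 1

theorem scaledSMatrix_mem {O : Subring K} {q t : K} {y : Fin 3 → K} (hq : q ∈ O)
    (h : ∀ a ∈ [1, y 0, (y 1)⁻¹], a * t⁻¹ ∈ O) (h' : ∀ a ∈ [1, y 0, (y 1)⁻¹], q * t * a⁻¹ ∈ O)
    (i : Fin 2) (l w : Fin 6) : scaledSMatrix q t y i l w ∈ O := by
  simp only [List.forall_mem_cons, List.not_mem_nil, one_mul, inv_one, mul_one, inv_inv] at h h'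
  have h_one := O.sub_mem hq O.one_mem
  fin_cases i <;> fin_cases l <;> fin_cases w <;> simp [scaledSMatrix, h, h', h_one]

theorem scaledTMatrix_mem {O : Subring K} {c : K} (hc : c ∈ O) (l w : Fin 6) :
    scaledTMatrix c l w ∈ O := by
  fin_cases l <;> fin_cases w <;> simp [scaledTMatrix, hc]

theorem scaledGenMatrix_mem {O : Subring K} {q t c : K} {y : Fin 3 → K} (hq : q ∈ O) (hc : c ∈ O)
    (hc' : c⁻¹ ∈ O) (h : ∀ a ∈ [1, y 0, (y 1)⁻¹], a * t⁻¹ ∈ O)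
    (h' : ∀ a ∈ [1, y 0, (y 1)⁻¹], q * t * a⁻¹ ∈ O) (i : Fin 4) (l w : Fin 6) :
    scaledGenMatrix q t c y i l w ∈ O := by
  fin_cases i
  · exact scaledTMatrix_mem hc l w
  · refine O.mul_mem hc' ?_
    rw [Matrix.mul_apply]
    exact O.sum_mem fun k _ ↦ O.mul_mem (scaledTMatrix_mem hc l k) (scaledTMatrix_mem hc k w)
  · exact scaledSMatrix_mem hq h h' 0 l w
  · exact scaledSMatrix_mem hq h h' 1 l w

end Rescaling

section IntegralStructure

open HeckeAlg

theorem ιE_gen (p : ℕ) (E : Type) [Field E] (f : ℕ) (i : Fin 4) :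
    ιE p E f (gen _ _ i) = gen E (qE p E f) i :=
  map_gen _ _ i

theorem ιE_algebraMap (p : ℕ) (E : Type) [Field E] (f : ℕ) (P : Polynomial ℤ) :
    ιE p E f (algebraMap _ _ P) = algebraMap E _ (P.eval₂ (Int.castRingHom E) (qE p E f)) :=
  map_algebraMap _ _ P

variable {p : ℕ} [Fact p.Prime] {E : Type} [Field E] [Algebra ℤ_[p] E] {f : ℕ}
  {u : Fin 3 → HE p E f} {χ : AE p E f u →ₐ[E] E}

theorem ιE_smul_mem_of_generators {L : Submodule (OE p E) (StdMod p E f u χ)}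
    (hL : ∀ i, ∀ x ∈ L, gen E (qE p E f) i • x ∈ L) (h : HPoly) {x : StdMod p E f u χ}
    (hx : x ∈ L) : ιE p E f h • x ∈ L := by
  induction h using HeckeAlg.induction generalizing x with
  | algebraMap P =>
    rw [ιE_algebraMap, algebraMap_smul]
    exact L.smul_mem ⟨_, eval₂_qE_mem_OE f P⟩ hx
  | gen i => exact ιE_gen p E f i ▸ hL i x hx
  | add a b ha hb =>
    rw [map_add, add_smul]
    exact L.add_mem (ha hx) (hb hx)
  | mul a b ha hb =>
    rw [map_mul, mul_smul]
    exact ha (hb hx)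

theorem isIntegralStructure_of_linearEquiv {n : ℕ} (e : (Fin n → E) ≃ₗ[E] StdMod p E f u χ)
    {N : Fin 4 → Matrix (Fin n) (Fin n) E} (hN : ∀ i l w, N i l w ∈ OE p E)
    (he : ∀ i, stdModRep p E f u χ (gen E (qE p E f) i) ∘ₗ e = e ∘ₗ (N i).toLin') :
    IsIntegralStructure p E f u χ {x | ∀ w, e.symm x w ∈ OE p E} := by
  let L : Submodule (OE p E) (StdMod p E f u χ) :=
    { carrier := {x | ∀ w, e.symm x w ∈ OE p E}
      add_mem' := fun hx hy w ↦ by simpa using add_mem (hx w) (hy w)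
      zero_mem' := fun w ↦ by simp [zero_mem]
      smul_mem' := fun c x hx w ↦ by
        rw [Subalgebra.smul_def, map_smul]
        exact mul_mem c.2 (hx w) }
  have h_gen (i : Fin 4) (x) (hx : x ∈ L) : gen E (qE p E f) i • x ∈ L := fun w ↦ by
    have h_apply := LinearMap.congr_fun (he i) (e.symm x)
    rw [LinearMap.comp_apply, LinearMap.comp_apply, LinearEquiv.coe_coe, e.apply_symm_apply,
      stdModRep_apply] at h_apply
    rw [h_apply, e.symm_apply_apply, Matrix.toLin'_apply, Matrix.mulVec, dotProduct]
    exact sum_mem fun k _ ↦ mul_mem (hN i w k) (hx k)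
  let B := (Pi.basisFun E (Fin n)).map e
  have hB (w : Fin n) : B w ∈ L := fun k ↦ by
    by_cases h : k = w <;> simp [B, h, one_mem, zero_mem]
  refine ⟨L.zero_mem, fun x hx y hy ↦ L.add_mem hx hy, fun c x hx ↦ L.smul_mem c hx,
    fun h x hx ↦ ιE_smul_mem_of_generators h_gen h hx, ⟨n, B, hB, fun x hx ↦ ?_⟩, n, B, hB⟩
  refine ⟨fun w ↦ ⟨e.symm x w, hx w⟩, (B.sum_repr x).symm, fun c hc ↦ ?_⟩
  ext w
  exact (congrFun (B.repr_sum_self fun i ↦ (c i : E)) w).symm.trans (congrArg (B.repr · w) hc.symm)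

variable [Algebra ℚ_[p] E] [FiniteDimensional ℚ_[p] E] [IsScalarTower ℤ_[p] ℚ_[p] E]

theorem IntCond.exists_scaling_parameter {y : Fin 3 → Eˣ} (hy : IntCond p E f y) :
    ∃ t : E, t ≠ 0 ∧ (∀ a ∈ [1, (y 0 : E), (y 1 : E)⁻¹], a * t⁻¹ ∈ OE p E) ∧
      ∀ a ∈ [1, (y 0 : E), (y 1 : E)⁻¹], qE p E f * t * a⁻¹ ∈ OE p E := by
  let a : Fin 3 → Eˣ := ![1, y 0, (y 1)⁻¹]
  obtain ⟨k, hk⟩ := exists_forall_mul_inv_mem_OE (p := p) fun i ↦ (a i : E)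
  obtain ⟨h_mul, -, h_zero, h_zero_inv⟩ := hy.2.2 0 1 (by decide)
  obtain ⟨-, h_mul_inv, h_one, h_one_inv⟩ := hy.2.2 1 0 (by decide)
  simp only [Units.val_mul, Units.val_inv_eq_inv_val, mul_inv, ← mul_assoc]
    at h_mul h_mul_inv h_zero_inv h_one_inv
  have h_quot (k i : Fin 3) : qE p E f * (a k : E) * (a i : E)⁻¹ ∈ OE p E := by
    fin_cases k <;> fin_cases i <;>
      simp [a, qE_mem_OE, h_mul, h_mul_inv, h_zero, h_zero_inv, h_one, h_one_inv]
  have h_forall {P : E → Prop} (hP : ∀ i, P (a i)) : ∀ b ∈ [1, (y 0 : E), (y 1 : E)⁻¹], P b := by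
    simpa [Fin.forall_fin_succ, a] using hP
  exact ⟨a k, (a k).ne_zero, h_forall hk, h_forall (h_quot k)⟩

theorem exists_isIntegralStructure (hu : ∀ i, u i * YE p E f i = 1) {y : Fin 3 → Eˣ}
    (hy : IntCond p E f y) (hχ : yval p E f u χ = fun i ↦ (y i : E)) :
    ∃ L, IsIntegralStructure p E f u χ L := by
  have : CharZero E := charZero_of_injective_algebraMap (algebraMap ℚ_[p] E).injective
  have hq : qE p E f ≠ 0 := qE_ne_zero f
  have hy0 (i : Fin 3) : yval p E f u χ i ≠ 0 := yval_ne_zero (hu i)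
  obtain ⟨e, he⟩ := exists_linearEquiv_stdMod hu (mul_inv_cancel₀ hq)
    (inv_mul_cancel₀ (mul_ne_zero (mul_ne_zero (hy0 0) (hy0 1)) (hy0 2)))
  obtain ⟨t, ht, h_mem, h_mem'⟩ := hy.exists_scaling_parameter
  let D := Matrix.diagonal (scaling (qE p E f) t (yval p E f u χ))
  let d : (Fin 6 → E) ≃ₗ[E] (Fin 6 → E) :=
    .piCongrRight fun w ↦ .smulOfNeZero E E _ (scaling_ne_zero hq ht hy0 w)
  have hd : d = D.toLin' := by
    refine LinearMap.ext fun x ↦ funext fun w ↦ ?_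
    rw [Matrix.toLin'_apply, Matrix.mulVec_diagonal]
    rfl
  have h_int := scaledGenMatrix_mem (O := (OE p E).toSubring) (y := yval p E f u χ)
    (c := yval p E f u χ 0 * yval p E f u χ 1 * yval p E f u χ 2) (qE_mem_OE f)
    (by simpa [hχ] using hy.1) (by simpa [hχ] using hy.2.1) (by simpa [hχ] using h_mem)
    (by simpa [hχ] using h_mem')
  refine ⟨_, isIntegralStructure_of_linearEquiv (d.trans e) h_int fun i ↦ ?_⟩
  rw [LinearEquiv.coe_trans, ← LinearMap.comp_assoc, he, stdRep_gen, LinearMap.comp_assoc,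
    LinearMap.comp_assoc, hd, ← Matrix.toLin'_mul, ← Matrix.toLin'_mul,
    genMatrix_mul_diagonal_scaling hq ht hy0]

end IntegralStructure

section Reduction

open HeckeAlg

theorem ιF_gen (p : ℕ) [Fact p.Prime] (i : Fin 4) : ιF p (gen _ _ i) = gen (Fbar p) 0 i :=
  map_gen _ _ i

theorem toMatrix_map_basisFun_eq {R M n : Type*} [CommRing R] [AddCommGroup M] [Module R M]
    [Fintype n] [DecidableEq n] (e : (n → R) ≃ₗ[R] M) {φ : Module.End R M} {N : Matrix n n R}
    (h : φ ∘ₗ e = e ∘ₗ N.toLin') :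
    LinearMap.toMatrix ((Pi.basisFun R n).map e) ((Pi.basisFun R n).map e) φ = N := by
  ext i j
  have h_apply := LinearMap.congr_fun h (Pi.single j 1)
  simp only [LinearMap.comp_apply, LinearEquiv.coe_coe] at h_apply
  simp [LinearMap.toMatrix_apply, h_apply]

variable {p : ℕ} [Fact p.Prime] {E : Type} [Field E] [Algebra ℤ_[p] E] {f : ℕ}
  {u : Fin 3 → HE p E f} {χ : AE p E f u →ₐ[E] E} {L : Set (StdMod p E f u χ)}

theorem IsIntegralStructure.map_sum_smul (hL : IsIntegralStructure p E f u χ L)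
    {r : OE p E →+* Fbar p} {V : Type} [AddCommGroup V] [Module (Fbar p) V]
    {π : StdMod p E f u χ → V} (h_add : ∀ x ∈ L, ∀ y ∈ L, π (x + y) = π x + π y)
    (h_smul : ∀ (c : OE p E), ∀ x ∈ L, π ((c : E) • x) = r c • π x)
    {ι : Type*} {b : ι → StdMod p E f u χ} (hb : ∀ i, b i ∈ L) (c : ι → OE p E)
    (s : Finset ι) : π (∑ i ∈ s, (c i : E) • b i) = ∑ i ∈ s, r (c i) • π (b i) := by
  have h_mem (s : Finset ι) : ∑ i ∈ s, (c i : E) • b i ∈ L :=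
    Finset.sum_induction _ (· ∈ L) (fun x y hx hy ↦ hL.2.1 x hx y hy) hL.1
      fun i _ ↦ hL.2.2.1 _ _ (hb i)
  induction s using Finset.cons_induction with
  | empty => simpa using h_smul 0 0 hL.1
  | cons i s _ ih =>
    rw [Finset.sum_cons, Finset.sum_cons, h_add _ (hL.2.2.1 _ _ (hb i)) _ (h_mem s),
      h_smul _ _ (hb i), ih]

variable [Algebra ℚ_[p] E] [FiniteDimensional ℚ_[p] E] [IsScalarTower ℤ_[p] ℚ_[p] E]

theorem IsIntegralStructure.exists_basis (hL : IsIntegralStructure p E f u χ L) {n : ℕ}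
    {b : Fin n → StdMod p E f u χ}
    (hb : ∀ x ∈ L, ∃! c : Fin n → OE p E, x = ∑ i, (c i : E) • b i) :
    ∃ B : Module.Basis (Fin n) E (StdMod p E f u χ), ⇑B = b := by
  have : IsFractionRing (OE p E) E := integralClosure.isFractionRing_of_finite_extension ℚ_[p] E
  have h_indep : LinearIndependent (OE p E) b := Fintype.linearIndependent_iff.mpr fun c hc ↦
    congrFun ((hb 0 hL.1).unique (y₂ := 0) hc.symm (by simp))
  obtain ⟨m, B, hB⟩ := hL.2.2.2.2.2
  have h_span : ⊤ ≤ Submodule.span E (Set.range b) := by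
    rw [← B.span_eq, Submodule.span_le]
    rintro _ ⟨i, rfl⟩
    obtain ⟨c, hc, -⟩ := hb _ (hB i)
    rw [hc]
    exact sum_mem fun j _ ↦ Submodule.smul_mem _ _ (Submodule.subset_span ⟨j, rfl⟩)
  exact ⟨.mk ((LinearIndependent.iff_fractionRing (OE p E) E).mp h_indep) h_span,
    Module.Basis.coe_mk _ _⟩

theorem exists_matrix_reduction (hL : IsIntegralStructure p E f u χ L) {r : OE p E →+* Fbar p}
    {V : Type} [AddCommGroup V] [Module (Fbar p) V] {π : StdMod p E f u χ → V}
    (hπ : IsReduction p E f u χ r L V π) {ρ : HF p →ₐ[Fbar p] Module.End (Fbar p) V}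
    (hρ : ∀ (h : HPoly), ∀ x ∈ L, ρ (ιF p h) (π x) = π (ιE p E f h • x)) :
    ∃ (n : ℕ) (B : Module.Basis (Fin n) E (StdMod p E f u χ)) (BV : Module.Basis (Fin n) (Fbar p) V)
      (G : Fin 4 → Matrix (Fin n) (Fin n) (OE p E)),
      (∀ i, LinearMap.toMatrix B B (stdModRep p E f u χ (gen E (qE p E f) i)) =
        (algebraMap (OE p E) E).mapMatrix (G i)) ∧
      ∀ i, LinearMap.toMatrix BV BV (ρ (gen (Fbar p) 0 i)) = r.mapMatrix (G i) := by
  obtain ⟨h_add, h_smul, n, b, hbL, hb, BV, hBV⟩ := hπ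
  obtain ⟨B, rfl⟩ := hL.exists_basis hb
  have h_act (i : Fin 4) (w : Fin n) :
      ∃ c : Fin n → OE p E, gen E (qE p E f) i • B w = ∑ l, (c l : E) • B l := by
    rw [← ιE_gen]
    exact (hb _ (hL.2.2.2.1 _ _ (hbL w))).exists
  choose c hc using h_act
  refine ⟨n, B, BV, fun i ↦ .of fun l w ↦ c i w l, fun i ↦ ?_, fun i ↦ ?_⟩ <;> ext l w
  · rw [LinearMap.toMatrix_apply, stdModRep_apply, hc, B.repr_sum_self]
    rfl
  · rw [LinearMap.toMatrix_apply, ← ιF_gen, hBV, hρ _ _ (hbL w), ιE_gen, hc,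
      hL.map_sum_smul h_add h_smul hbL]
    simp only [← hBV]
    rw [BV.repr_sum_self]
    rfl

theorem exists_genericDet_reduction (hu : ∀ i, u i * YE p E f i = 1) {ci : E}
    (hci : ci * (yval p E f u χ 0 * yval p E f u χ 1 * yval p E f u χ 2) = 1)
    (hL : IsIntegralStructure p E f u χ L) {r : OE p E →+* Fbar p}
    {V : Type} [AddCommGroup V] [Module (Fbar p) V] {π : StdMod p E f u χ → V}
    (hπ : IsReduction p E f u χ r L V π) {ρ : HF p →ₐ[Fbar p] Module.End (Fbar p) V}
    (hρ : ∀ (h : HPoly), ∀ x ∈ L, ρ (ιF p h) (π x) = π (ιE p E f h • x)) :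
    FiniteDimensional (Fbar p) V ∧ ∃ G : Fin 4 → Matrix (Fin 6) (Fin 6) (OE p E),
      (∀ s, MvPolynomial.map (algebraMap (OE p E) E) (genericDet G s) =
        genericDet (genMatrix (qE p E f) (qE p E f)⁻¹ ci (yval p E f u χ)) s) ∧
      ∀ a, (ρ (RingQuot.mkAlgHom (Fbar p) _ a)).det =
        (FreeAlgebra.lift (Fbar p) (fun i ↦ r.mapMatrix (G i)) a).det := by
  have : CharZero E := charZero_of_injective_algebraMap (algebraMap ℚ_[p] E).injective
  obtain ⟨e, he⟩ := exists_linearEquiv_stdMod hu (mul_inv_cancel₀ (qE_ne_zero f)) hci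
  obtain ⟨n, B, BV, G, hB, hBV⟩ := exists_matrix_reduction hL hπ hρ
  obtain rfl : n = 6 := by
    simpa [Module.finrank_eq_card_basis B] using e.finrank_eq.symm
  refine ⟨.of_basis BV, G, fun s ↦ ?_, fun a ↦ ?_⟩
  · let B' := (Pi.basisFun E (Fin 6)).map e
    have hB' (i : Fin 4) : LinearMap.toMatrix B' B' (stdModRep p E f u χ (gen E (qE p E f) i)) =
        genMatrix (qE p E f) (qE p E f)⁻¹ ci (yval p E f u χ) i :=
      toMatrix_map_basisFun_eq e (by rw [he, stdRep_gen])
    have h_det : (B'.toMatrix B).det ≠ 0 := by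
      rw [← Module.Basis.det_apply]
      exact (B'.isUnit_det B).ne_zero
    rw [map_genericDet]
    refine genericDet_eq_of_intertwining h_det (fun i ↦ ?_) s
    rw [← hB, ← hB', basis_toMatrix_mul_linearMap_toMatrix, linearMap_toMatrix_mul_basis_toMatrix]
  · rw [← LinearMap.det_toMatrix BV]
    congr 1
    let Ψ : FreeAlgebra (Fbar p) (Fin 4) →ₐ[Fbar p] Matrix (Fin 6) (Fin 6) (Fbar p) :=
      (LinearMap.toMatrixAlgEquiv BV).toAlgHom.comp (ρ.comp (RingQuot.mkAlgHom (Fbar p) _))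
    have hΨ : Ψ = FreeAlgebra.lift (Fbar p) (fun i ↦ r.mapMatrix (G i)) :=
      FreeAlgebra.hom_ext <| funext fun i ↦ by
        rw [Function.comp_apply, Function.comp_apply, FreeAlgebra.lift_ι_apply]
        exact hBV i
    exact DFunLike.congr_fun hΨ a

end Reduction

section Main

variable {p : ℕ} [Fact p.Prime] {E : Type} [Field E] [Algebra ℤ_[p] E] {f : ℕ}
  {u : Fin 3 → HE p E f}

variable [Algebra ℚ_[p] E] [FiniteDimensional ℚ_[p] E] [IsScalarTower ℤ_[p] ℚ_[p] E]

theorem sameJHFactors_of_yval_eq_comp_perm (hu : ∀ i, u i * YE p E f i = 1)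
    {χ χ' : AE p E f u →ₐ[E] E} {σ : Equiv.Perm (Fin 3)}
    (hχ : yval p E f u χ' = yval p E f u χ ∘ σ)
    {L : Set (StdMod p E f u χ)} {L' : Set (StdMod p E f u χ')}
    (hL : IsIntegralStructure p E f u χ L) (hL' : IsIntegralStructure p E f u χ' L')
    {r : OE p E →+* Fbar p} {V V' : Type} [AddCommGroup V] [Module (Fbar p) V]
    [AddCommGroup V'] [Module (Fbar p) V']
    {π : StdMod p E f u χ → V} {π' : StdMod p E f u χ' → V'}
    (hπ : IsReduction p E f u χ r L V π) (hπ' : IsReduction p E f u χ' r L' V' π')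
    {ρ : HF p →ₐ[Fbar p] Module.End (Fbar p) V} {ρ' : HF p →ₐ[Fbar p] Module.End (Fbar p) V'}
    (hρ : ∀ (h : HPoly), ∀ x ∈ L, ρ (ιF p h) (π x) = π (ιE p E f h • x))
    (hρ' : ∀ (h : HPoly), ∀ x ∈ L', ρ' (ιF p h) (π' x) = π' (ιE p E f h • x)) :
    SameJHFactors p ρ ρ' := by
  have : CharZero E := charZero_of_injective_algebraMap (algebraMap ℚ_[p] E).injective
  let c := ∏ i, yval p E f u χ i
  have h_ne_zero : c ≠ 0 := Finset.prod_ne_zero_iff.mpr fun i _ ↦ yval_ne_zero (hu i)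
  have h_prod : ∏ i, yval p E f u χ' i = c := by
    rw [hχ]
    exact Equiv.prod_comp σ (yval p E f u χ)
  have hc : c⁻¹ * (yval p E f u χ 0 * yval p E f u χ 1 * yval p E f u χ 2) = 1 := by
    rw [← Fin.prod_univ_three, inv_mul_cancel₀ h_ne_zero]
  have hc' : c⁻¹ * (yval p E f u χ' 0 * yval p E f u χ' 1 * yval p E f u χ' 2) = 1 := by
    rw [← Fin.prod_univ_three, h_prod, inv_mul_cancel₀ h_ne_zero]
  obtain ⟨_, G, hG, h_det⟩ := exists_genericDet_reduction hu hc hL hπ hρ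
  obtain ⟨_, G', hG', h_det'⟩ := exists_genericDet_reduction hu hc' hL' hπ' hρ'
  have h_genericDet (s) : genericDet G s = genericDet G' s := by
    apply MvPolynomial.map_injective (algebraMap (OE p E) E) Subtype.val_injective
    rw [hG, hG', hχ]
    exact genericDet_genMatrix_perm (mul_inv_cancel₀ (qE_ne_zero f)) _ σ _ s
  refine sameJHFactors_of_det_eq fun a ↦ ?_
  obtain ⟨a, rfl⟩ := RingQuot.mkAlgHom_surjective (Fbar p) _ a
  rw [h_det, h_det', det_lift_eq_of_genericDet_eq h_genericDet]

end Main

/-- Let `(y_1, y_2, y_3) ∈ (E^×)^3` satisfy the integrality conditions.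
Then for every permutation `σ` of `{1,2,3}` the permuted triple satisfies the same conditions;
moreover, if `χ` and `χ'` are `E`-algebra homomorphisms `A_E → E` with `χ(Y_i) = y_i` and
`χ'(Y_i) = y_{σ(i)}`, then the standard modules `I_A(χ)` and `I_A(χ')` both admit
`O_E`-integral structures, and the reductions of these integral structures to
`H_{F̄_p}`-modules have isomorphic semisimplifications. -/
theorem statement7 (p : ℕ) [Fact p.Prime] (E : Type) [Field E] [Algebra ℚ_[p] E]
    [FiniteDimensional ℚ_[p] E] [Algebra ℤ_[p] E] [IsScalarTower ℤ_[p] ℚ_[p] E]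
    (f : ℕ) (hf : 0 < f)
    (y : Fin 3 → Eˣ) (hy : IntCond p E f y) (σ : Equiv.Perm (Fin 3)) :
    IntCond p E f (y ∘ σ) ∧
    ∀ (u : Fin 3 → HE p E f) (hu : ∀ i, YE p E f i * u i = 1 ∧ u i * YE p E f i = 1)
      (χ χ' : AE p E f u →ₐ[E] E),
      (∀ i, yval p E f u χ i = (y i : E)) → (∀ i, yval p E f u χ' i = (y (σ i) : E)) →
      (∃ L : Set (StdMod p E f u χ), IsIntegralStructure p E f u χ L) ∧
      (∃ L' : Set (StdMod p E f u χ'), IsIntegralStructure p E f u χ' L') ∧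
      ∀ (L : Set (StdMod p E f u χ)) (L' : Set (StdMod p E f u χ')),
        IsIntegralStructure p E f u χ L → IsIntegralStructure p E f u χ' L' →
        ∀ (r : OE p E →+* Fbar p) (V V' : Type)
          [AddCommGroup V] [Module (Fbar p) V] [AddCommGroup V'] [Module (Fbar p) V']
          (π : StdMod p E f u χ → V) (π' : StdMod p E f u χ' → V'),
          IsReduction p E f u χ r L V π → IsReduction p E f u χ' r L' V' π' →
          ∀ (ρ : HF p →ₐ[Fbar p] Module.End (Fbar p) V)
            (ρ' : HF p →ₐ[Fbar p] Module.End (Fbar p) V'),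
            (∀ (h : HPoly) (x : StdMod p E f u χ), x ∈ L →
              ρ (ιF p h) (π x) = π (ιE p E f h • x)) →
            (∀ (h : HPoly) (x : StdMod p E f u χ'), x ∈ L' →
              ρ' (ιF p h) (π' x) = π' (ιE p E f h • x)) →
            SameJHFactors p ρ ρ' := by
  have hyσ := hy.comp_perm σ
  refine ⟨hyσ, fun u hu χ χ' hχ hχ' ↦ ?_⟩
  have hu_left (i : Fin 3) : u i * YE p E f i = 1 := (hu i).2
  have h_perm : yval p E f u χ' = yval p E f u χ ∘ σ :=
    funext fun i ↦ (hχ' i).trans (hχ (σ i)).symm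
  refine ⟨exists_isIntegralStructure hu_left hy (funext hχ),
    exists_isIntegralStructure hu_left hyσ (funext hχ'), ?_⟩
  intro L L' hL hL' r V V' _ _ _ _ π π' hπ hπ' ρ ρ' hρ hρ'
  exact sameJHFactors_of_yval_eq_comp_perm hu_left h_perm hL hL' hπ hπ' hρ hρ'
end

section
/- Let O be a commutative ring, q ∈ O, z a unit of O, and a, a', b, b', c, c' ∈ O with aa' = bb' = cc' = q. On the free O-module O^6 with basis e_1, …, e_6 define O-linear endomorphisms T and S by: Te_1 = e_2, Te_2 = e_3, Te_3 = z e_1, Te_4 = e_5, Te_5 = e_6, Te_6 = z e_4, and Se_1 = a e_4, Se_2 = b e_6, Se_3 = (q-1)e_3 + c' e_5, Se_4 = a' e_1 + (q-1)e_4, Se_5 = c e_3, Se_6 = b' e_2 + (q-1)e_6. Then T is invertible, (S+1)(S-q) = 0, T^3 S = S T^3, and, setting S' = T^{-1} S T, one has S S' S = S' S S'. Consequently the assignments T ↦ T, S_1 ↦ S, S_2 ↦ S' make O^6 a left module over H_O. -/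
/-!
The vectors `e_1, …, e_6` sit at the vertices of a hexagon, the weak Bruhat order of the symmetric
group on three letters, with `e_1` at the bottom and `e_6` at the top. The edges of `S` and
`S' = T⁻¹ S T` alternate along the hexagon:
`e_1 -S- e_4 -S'- e_2 -S- e_6` and `e_1 -S'- e_5 -S- e_3 -S'- e_6`.
On the span of each edge the operator is a `2 × 2` block with eigenvalues `-1` and `q`, which is the
quadratic relation. Opposite edges carry the same coefficients, so the two paths from bottom to top
agree; this is the braid relation on `e_1`, and `aa' = bb' = cc'` balances the terms that descend
from the other vertices. Finally `T ^ 3` is the scalar `z`, so `T` is invertible and `T ^ 3` is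
central.
-/

namespace HeckeAlg

variable {R : Type} [CommRing R] {q : R} {A : Type*} [Ring A] [Algebra R A]

/-- The universal property of `H_R`: the homomorphism out of `H_R` attached to a unit `T` and
elements `S₁`, `S₂` that satisfy the defining relations. -/
noncomputable def lift (T : Aˣ) (S₁ S₂ : A) (quad : (S₁ + 1) * (S₁ - algebraMap R A q) = 0)
    (cube_comm : (T : A) ^ 3 * S₁ = S₁ * (T : A) ^ 3) (braid : S₁ * S₂ * S₁ = S₂ * S₁ * S₂)
    (conj : (T : A) * S₂ = S₁ * T) : HeckeAlg R q →ₐ[R] A :=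
  RingQuot.liftAlgHom R ⟨FreeAlgebra.lift R ![(T : A), ↑T⁻¹, S₁, S₂], fun _ _ h => by
    cases h with
    | TTinv => simp
    | TinvT => simp
    | quad => simpa using quad
    | T3S1 => simpa using cube_comm
    | braid => simpa using braid
    | TS2 => simpa using conj⟩

variable (T : Aˣ) (S₁ S₂ : A) (quad : (S₁ + 1) * (S₁ - algebraMap R A q) = 0)
  (cube_comm : (T : A) ^ 3 * S₁ = S₁ * (T : A) ^ 3) (braid : S₁ * S₂ * S₁ = S₂ * S₁ * S₂)
  (conj : (T : A) * S₂ = S₁ * T)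

@[simp]
theorem lift_T : lift T S₁ S₂ quad cube_comm braid conj (HeckeAlg.T R q) = T := by
  simp [lift, HeckeAlg.T, gen]

@[simp]
theorem lift_S1 : lift T S₁ S₂ quad cube_comm braid conj (S1 R q) = S₁ := by
  simp [lift, S1, gen]

@[simp]
theorem lift_S2 : lift T S₁ S₂ quad cube_comm braid conj (S2 R q) = S₂ := by
  simp [lift, S2, gen]

end HeckeAlg

section Hexagon

variable {R M : Type*} [CommRing R] [AddCommGroup M] [Module R M]

/-- `S` acts on the ordered pair `(x, y)` like a generator of a Hecke algebra with parameter `q` on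
the basis elements indexed by `w < sw`, rescaled so that `S x = α y` instead of `S x = y`. -/
structure IsHeckeEdge (q α α' : R) (S : Module.End R M) (x y : M) : Prop where
  mul_eq : α * α' = q
  apply_lower : S x = α • y
  apply_upper : S y = α' • x + (q - 1) • y

namespace IsHeckeEdge

variable {q α α' : R} {S : Module.End R M} {x y : M}

theorem smul (h : IsHeckeEdge q α α' S x y) (r : R) : IsHeckeEdge q α α' S (r • x) (r • y) where
  mul_eq := h.mul_eq
  apply_lower := by rw [map_smul, h.apply_lower, smul_comm]
  apply_upper := by rw [map_smul, h.apply_upper, smul_add, smul_comm r, smul_comm r]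

theorem conj {T : (Module.End R M)ˣ}
    (h : IsHeckeEdge q α α' S ((T : Module.End R M) x) ((T : Module.End R M) y)) :
    IsHeckeEdge q α α' (↑T⁻¹ * S * T : Module.End R M) x y := by
  have inv_apply (v : M) : (↑T⁻¹ : Module.End R M) ((T : Module.End R M) v) = v :=
    LinearMap.congr_fun T.inv_mul v
  exact
    { mul_eq := h.mul_eq
      apply_lower := by
        simp only [Module.End.mul_apply, h.apply_lower, map_smul, inv_apply]
      apply_upper := by
        simp only [Module.End.mul_apply, h.apply_upper, map_add, map_smul, inv_apply] }

theorem quadratic_lower (h : IsHeckeEdge q α α' S x y) :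
    ((S + 1) * (S - algebraMap R (Module.End R M) q)) x = 0 := by
  simp only [Module.End.mul_apply, LinearMap.add_apply, LinearMap.sub_apply, Module.End.one_apply,
    Module.algebraMap_end_apply, map_sub, map_smul, h.apply_lower, h.apply_upper]
  linear_combination (norm := module) h.mul_eq • x

theorem quadratic_upper (h : IsHeckeEdge q α α' S x y) :
    ((S + 1) * (S - algebraMap R (Module.End R M) q)) y = 0 := by
  simp only [Module.End.mul_apply, LinearMap.add_apply, LinearMap.sub_apply, Module.End.one_apply,
    Module.algebraMap_end_apply, map_sub, map_add, map_smul, h.apply_lower, h.apply_upper]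
  linear_combination (norm := module) h.mul_eq • y

end IsHeckeEdge

/-- `S` and `S'` act on `v 0, …, v 5` as on the weak Bruhat order of the symmetric group on three
letters, with bottom `v 0` and top `v 5`; opposite edges of the hexagon carry the same
coefficients. The vertices are numbered so that the standard action below is in the order of the
basis `e_1, …, e_6`. -/
structure IsHeckeHexagon (q a a' b b' c c' : R) (S S' : Module.End R M) (v : Fin 6 → M) :
    Prop where
  left₀₃ : IsHeckeEdge q a a' S (v 0) (v 3)
  left₁₅ : IsHeckeEdge q b b' S (v 1) (v 5)
  left₄₂ : IsHeckeEdge q c c' S (v 4) (v 2)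
  right₂₅ : IsHeckeEdge q a a' S' (v 2) (v 5)
  right₀₄ : IsHeckeEdge q b b' S' (v 0) (v 4)
  right₃₁ : IsHeckeEdge q c c' S' (v 3) (v 1)

namespace IsHeckeHexagon

variable {q a a' b b' c c' : R} {S S' : Module.End R M} {v : Fin 6 → M}

theorem symm (h : IsHeckeHexagon q a a' b b' c c' S S' v) :
    IsHeckeHexagon q b b' a a' c c' S' S ![v 0, v 2, v 1, v 4, v 3, v 5] :=
  ⟨h.right₀₄, h.right₂₅, h.right₃₁, h.left₁₅, h.left₀₃, h.left₄₂⟩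

theorem braid_apply_zero (h : IsHeckeHexagon q a a' b b' c c' S S' v) :
    (S * S' * S) (v 0) = (S' * S * S') (v 0) := by
  simp only [Module.End.mul_apply, map_smul, h.left₀₃.apply_lower, h.left₁₅.apply_lower,
    h.left₄₂.apply_lower, h.right₂₅.apply_lower, h.right₀₄.apply_lower, h.right₃₁.apply_lower]
  module

theorem braid_apply_three (h : IsHeckeHexagon q a a' b b' c c' S S' v) :
    (S * S' * S) (v 3) = (S' * S * S') (v 3) := by
  simp only [Module.End.mul_apply, map_add, map_smul, h.left₀₃.apply_upper, h.left₁₅.apply_lower,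
    h.left₄₂.apply_lower, h.right₂₅.apply_upper, h.right₀₄.apply_lower, h.right₃₁.apply_lower]
  module

theorem braid_apply_one (h : IsHeckeHexagon q a a' b b' c c' S S' v) :
    (S * S' * S) (v 1) = (S' * S * S') (v 1) := by
  have hbc : b * b' = c * c' := h.left₁₅.mul_eq.trans h.right₃₁.mul_eq.symm
  simp only [Module.End.mul_apply, map_add, map_smul, h.left₀₃.apply_upper, h.left₁₅.apply_lower,
    h.left₁₅.apply_upper, h.left₄₂.apply_upper, h.right₂₅.apply_upper, h.right₀₄.apply_lower,
    h.right₃₁.apply_lower, h.right₃₁.apply_upper]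
  linear_combination (norm := module) ((q - 1) * hbc) • v 1

theorem braid_apply_five (h : IsHeckeHexagon q a a' b b' c c' S S' v) :
    (S * S' * S) (v 5) = (S' * S * S') (v 5) := by
  have hab : a * a' = b * b' := h.left₀₃.mul_eq.trans h.left₁₅.mul_eq.symm
  simp only [Module.End.mul_apply, map_add, map_smul, h.left₀₃.apply_upper, h.left₁₅.apply_lower,
    h.left₁₅.apply_upper, h.left₄₂.apply_upper, h.right₂₅.apply_lower, h.right₂₅.apply_upper,
    h.right₀₄.apply_upper, h.right₃₁.apply_upper]
  linear_combination (norm := module) ((1 - q) * hab) • v 5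

theorem quadratic (h : IsHeckeHexagon q a a' b b' c c' S S' v)
    (hv : Submodule.span R (Set.range v) = ⊤) :
    (S + 1) * (S - algebraMap R (Module.End R M) q) = 0 := by
  refine LinearMap.ext_on_range hv fun i => ?_
  fin_cases i
  exacts [h.left₀₃.quadratic_lower, h.left₁₅.quadratic_lower, h.left₄₂.quadratic_upper,
    h.left₀₃.quadratic_upper, h.left₄₂.quadratic_lower, h.left₁₅.quadratic_upper]

theorem braid (h : IsHeckeHexagon q a a' b b' c c' S S' v)
    (hv : Submodule.span R (Set.range v) = ⊤) : S * S' * S = S' * S * S' := by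
  refine LinearMap.ext_on_range hv fun i => ?_
  fin_cases i
  exacts [h.braid_apply_zero, h.braid_apply_one, h.symm.braid_apply_one.symm,
    h.braid_apply_three, h.symm.braid_apply_three.symm, h.braid_apply_five]

end IsHeckeHexagon

/-- `T` and `S` act on `e 0, …, e 5` by the formulas of the standard module, where `e i` stands for
`e_{i+1}`. -/
structure IsStandardAction (q z a a' b b' c c' : R) (T S : Module.End R M) (e : Fin 6 → M) :
    Prop where
  T_zero : T (e 0) = e 1
  T_one : T (e 1) = e 2
  T_two : T (e 2) = z • e 0
  T_three : T (e 3) = e 4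
  T_four : T (e 4) = e 5
  T_five : T (e 5) = z • e 3
  edge₀₃ : IsHeckeEdge q a a' S (e 0) (e 3)
  edge₁₅ : IsHeckeEdge q b b' S (e 1) (e 5)
  edge₄₂ : IsHeckeEdge q c c' S (e 4) (e 2)

namespace IsStandardAction

variable {q z a a' b b' c c' : R} {T S : Module.End R M} {e : Fin 6 → M}

theorem T_pow_three (h : IsStandardAction q z a a' b b' c c' T S e)
    (he : Submodule.span R (Set.range e) = ⊤) : T ^ 3 = algebraMap R (Module.End R M) z := by
  refine LinearMap.ext_on_range he fun i => ?_
  fin_cases i <;>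
    simp [pow_succ, h.T_zero, h.T_one, h.T_two, h.T_three, h.T_four, h.T_five]

theorem isUnit_T (h : IsStandardAction q z a a' b b' c c' T S e)
    (he : Submodule.span R (Set.range e) = ⊤) (hz : IsUnit z) : IsUnit T := by
  rw [← isUnit_pow_iff three_ne_zero, h.T_pow_three he]
  exact hz.map _

theorem hexagon {T : (Module.End R M)ˣ} (h : IsStandardAction q z a a' b b' c c' T S e) :
    IsHeckeHexagon q a a' b b' c c' S (↑T⁻¹ * S * ↑T) e where
  left₀₃ := h.edge₀₃
  left₁₅ := h.edge₁₅
  left₄₂ := h.edge₄₂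
  right₂₅ := .conj <| by simpa only [h.T_two, h.T_five] using h.edge₀₃.smul z
  right₀₄ := .conj <| by simpa only [h.T_zero, h.T_four] using h.edge₁₅
  right₃₁ := .conj <| by simpa only [h.T_three, h.T_one] using h.edge₄₂

end IsStandardAction

end Hexagon

theorem isStandardAction_mulVecLin {R : Type*} [CommRing R] {q a a' b b' c c' : R} (z : R)
    (ha : a * a' = q) (hb : b * b' = q) (hc : c * c' = q) :
    IsStandardAction q z a a' b b' c c'
      (Matrix.mulVecLin
        !![0, 0, z, 0, 0, 0;
           1, 0, 0, 0, 0, 0;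
           0, 1, 0, 0, 0, 0;
           0, 0, 0, 0, 0, z;
           0, 0, 0, 1, 0, 0;
           0, 0, 0, 0, 1, 0])
      (Matrix.mulVecLin
        !![0, 0, 0,     a', 0, 0;
           0, 0, 0,     0,  0, b';
           0, 0, q - 1, 0,  c, 0;
           a, 0, 0,     q - 1, 0, 0;
           0, 0, c',    0,  0, 0;
           0, b, 0,     0,  0, q - 1])
      (Pi.basisFun R (Fin 6)) := by
  constructor
  case edge₀₃ => refine ⟨ha, ?_, ?_⟩ <;> ext i <;> fin_cases i <;> simp
  case edge₁₅ => refine ⟨hb, ?_, ?_⟩ <;> ext i <;> fin_cases i <;> simp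
  case edge₄₂ => refine ⟨hc, ?_, ?_⟩ <;> ext i <;> fin_cases i <;> simp
  all_goals ext i; fin_cases i <;> simp

theorem statement8_general {O : Type} {M : Type*} [CommRing O] [AddCommGroup M] [Module O M]
    {q z a a' b b' c c' : O} {T S : Module.End O M} {e : Fin 6 → M}
    (h : IsStandardAction q z a a' b b' c c' T S e)
    (he : Submodule.span O (Set.range e) = ⊤) (hz : IsUnit z) :
    IsUnit T ∧
    (S + 1) * (S - algebraMap O (Module.End O M) q) = 0 ∧
    T ^ 3 * S = S * T ^ 3 ∧
    S * (Ring.inverse T * S * T) * S =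
      (Ring.inverse T * S * T) * S * (Ring.inverse T * S * T) ∧
    ∃ ρ : HeckeAlg O q →ₐ[O] Module.End O M,
      ρ (HeckeAlg.T O q) = T ∧ ρ (HeckeAlg.S1 O q) = S ∧
      ρ (HeckeAlg.S2 O q) = Ring.inverse T * S * T := by
  obtain ⟨T, rfl⟩ := h.isUnit_T he hz
  rw [Ring.inverse_unit]
  have quad := h.hexagon.quadratic he
  have cube_comm : (T : Module.End O M) ^ 3 * S = S * (T : Module.End O M) ^ 3 := by
    rw [h.T_pow_three he, Algebra.commutes]
  have braid := h.hexagon.braid he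
  have conj : (T : Module.End O M) * (↑T⁻¹ * S * ↑T) = S * T := by
    rw [mul_assoc, Units.mul_inv_cancel_left]
  exact ⟨T.isUnit, quad, cube_comm, braid, HeckeAlg.lift T S _ quad cube_comm braid conj,
    HeckeAlg.lift_T .., HeckeAlg.lift_S1 .., HeckeAlg.lift_S2 ..⟩

/-- Let `O` be a commutative ring, `q ∈ O`, `z` a unit of `O`, and
`a, a', b, b', c, c' ∈ O` with `aa' = bb' = cc' = q`. On the free `O`-module `O^6` define
the endomorphisms `T` and `S` by the matrices of the statement. Then `T` is invertible,
`(S+1)(S-q) = 0`, `T^3 S = S T^3`, and, setting `S' = T⁻¹ S T`, one has `S S' S = S' S S'`.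
Consequently the assignments `T ↦ T`, `S_1 ↦ S`, `S_2 ↦ S'` make `O^6` a left module over
`H_O`. -/
theorem statement8 (O : Type) [CommRing O] (q z a a' b b' c c' : O) (hz : IsUnit z)
    (ha : a * a' = q) (hb : b * b' = q) (hc : c * c' = q) :
    let Tm : Module.End O (Fin 6 → O) := Matrix.mulVecLin
      !![0, 0, z, 0, 0, 0;
         1, 0, 0, 0, 0, 0;
         0, 1, 0, 0, 0, 0;
         0, 0, 0, 0, 0, z;
         0, 0, 0, 1, 0, 0;
         0, 0, 0, 0, 1, 0]
    let Sm : Module.End O (Fin 6 → O) := Matrix.mulVecLin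
      !![0, 0, 0,     a', 0, 0;
         0, 0, 0,     0,  0, b';
         0, 0, q - 1, 0,  c, 0;
         a, 0, 0,     q - 1, 0, 0;
         0, 0, c',    0,  0, 0;
         0, b, 0,     0,  0, q - 1]
    IsUnit Tm ∧
    (Sm + 1) * (Sm - algebraMap O (Module.End O (Fin 6 → O)) q) = 0 ∧
    Tm ^ 3 * Sm = Sm * Tm ^ 3 ∧
    Sm * (Ring.inverse Tm * Sm * Tm) * Sm =
      (Ring.inverse Tm * Sm * Tm) * Sm * (Ring.inverse Tm * Sm * Tm) ∧
    ∃ ρ : HeckeAlg O q →ₐ[O] Module.End O (Fin 6 → O),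
      ρ (HeckeAlg.T O q) = Tm ∧ ρ (HeckeAlg.S1 O q) = Sm ∧
      ρ (HeckeAlg.S2 O q) = Ring.inverse Tm * Sm * Tm := by
  exact statement8_general (isStandardAction_mulVecLin z ha hb hc)
    (Pi.basisFun O (Fin 6)).span_eq hz
end

section
/- For z, y ∈ k^×, the formulas defining L_6(z,y) satisfy the defining relations of H_k, so they endow the 6-dimensional k-vector space with an H_k-module structure, and the H_k-module L_6(z,y) is simple. -/
noncomputable section

variable (p : ℕ) [Fact p.Prime] (k : Type) [Field k] [IsAlgClosed k] [CharP k p]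

/-- `H_k = H ⊗_{ℤ[q]} k` with `q ↦ 0`. -/
abbrev Hk : Type := HeckeAlg k 0

/-- The action of `T` on a `1`-dimensional space: multiplication by `c`. -/
def Tmat1 (c : k) : Module.End k (Fin 1 → k) := Matrix.mulVecLin !![c]

/-- The action of `T` on the `2`-dimensional space with basis `w, Tw` where
`T(Tw) = -y²w - yTw`. -/
def Tmat2 (y : k) : Module.End k (Fin 2 → k) := Matrix.mulVecLin !![0, -y^2; 1, -y]

/-- The action of `T` on the `3`-dimensional space with basis `v, Tv, T²v` where
`T(T²v) = zv`. -/
def Tmat3 (z : k) : Module.End k (Fin 3 → k) := Matrix.mulVecLin !![0, 0, z; 1, 0, 0; 0, 1, 0]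

/-- The action of `T` on the `6`-dimensional space with basis `v, Tv, T²v, w, Tw, T²w`
where `T(T²v) = zv`, `T(T²w) = zw`. -/
def Tmat6 (z : k) : Module.End k (Fin 6 → k) := Matrix.mulVecLin
  !![0, 0, z, 0, 0, 0;
     1, 0, 0, 0, 0, 0;
     0, 1, 0, 0, 0, 0;
     0, 0, 0, 0, 0, z;
     0, 0, 0, 1, 0, 0;
     0, 0, 0, 0, 1, 0]

/-- The action of `S_1` on `L_6(z,y)`: `S_1v = 0`, `S_1(Tv) = T²w`, `S_1(T²v) = -T²v`,
`S_1w = -w`, `S_1(Tw) = (y/z)T²v`, `S_1(T²w) = -T²w`. -/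
def SL6 (z y : k) : Module.End k (Fin 6 → k) := Matrix.mulVecLin
  !![0, 0, 0,  0,  0,     0;
     0, 0, 0,  0,  0,     0;
     0, 0, -1, 0,  y / z, 0;
     0, 0, 0,  -1, 0,     0;
     0, 0, 0,  0,  0,     0;
     0, 1, 0,  0,  0,     -1]

/-- The action of `S_1` on `L̃_6(z,y)`: as on `L_6(z,y)` except `S_1v = w`, `S_1(Tv) = 0`. -/
def SLt6 (z y : k) : Module.End k (Fin 6 → k) := Matrix.mulVecLin
  !![0, 0, 0,  0,  0,     0;
     0, 0, 0,  0,  0,     0;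
     0, 0, -1, 0,  y / z, 0;
     1, 0, 0,  -1, 0,     0;
     0, 0, 0,  0,  0,     0;
     0, 0, 0,  0,  0,     -1]

/-- The action of `S_1` on `K_6(z,y,y')`: `S_1v = w`, `S_1(Tv) = (y/y')T²w`,
`S_1(T²v) = -T²v`, `S_1w = -w`, `S_1(Tw) = (y'/z)T²v`, `S_1(T²w) = -T²w`. -/
def SK6 (z y y' : k) : Module.End k (Fin 6 → k) := Matrix.mulVecLin
  !![0, 0,      0,  0,  0,      0;
     0, 0,      0,  0,  0,      0;
     0, 0,      -1, 0,  y' / z, 0;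
     1, 0,      0,  -1, 0,      0;
     0, 0,      0,  0,  0,      0;
     0, y / y', 0,  0,  0,      -1]

/-- The action of `S_1` on `M_3(z,y)`: `S_1v = 0`, `S_1(Tv) = y⁻¹T²v`, `S_1(T²v) = -T²v`. -/
def SM3 (y : k) : Module.End k (Fin 3 → k) := Matrix.mulVecLin
  !![0, 0, 0; 0, 0, 0; 0, y⁻¹, -1]

/-- The action of `S_1` on `M̃_3(z,y)`: `S_1v = -v`, `S_1(Tv) = -y⁻¹T²v`, `S_1(T²v) = -T²v`. -/
def SMt3 (y : k) : Module.End k (Fin 3 → k) := Matrix.mulVecLin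
  !![-1, 0, 0; 0, 0, 0; 0, -y⁻¹, -1]

/-- The action of `S_1` on `N_3(z,y)`: `S_1v = -v`, `S_1(Tv) = 0`, `S_1(T²v) = -yTv - T²v`. -/
def SN3 (y : k) : Module.End k (Fin 3 → k) := Matrix.mulVecLin
  !![-1, 0, 0; 0, 0, -y; 0, 0, -1]

/-- The action of `S_1` on `Ñ_3(z,y)`: `S_1v = 0`, `S_1(Tv) = 0`, `S_1(T²v) = yTv - T²v`. -/
def SNt3 (y : k) : Module.End k (Fin 3 → k) := Matrix.mulVecLin
  !![0, 0, 0; 0, 0, y; 0, 0, -1]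

/-- The action of `S_1` on `P_3(z)`: `S_1v = 0`, `S_1(Tv) = 0`, `S_1(T²v) = -T²v`. -/
def SP3 : Module.End k (Fin 3 → k) := Matrix.mulVecLin
  !![0, 0, 0; 0, 0, 0; 0, 0, -1]

/-- The action of `S_1` on `P̃_3(z)`: `S_1v = -v`, `S_1(Tv) = 0`, `S_1(T²v) = -T²v`. -/
def SPt3 : Module.End k (Fin 3 → k) := Matrix.mulVecLin
  !![-1, 0, 0; 0, 0, 0; 0, 0, -1]

/-- The action of `S_1` on `M_2(y)`: `S_1w = -w`, `S_1(Tw) = 0`. -/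
def SM2 : Module.End k (Fin 2 → k) := Matrix.mulVecLin !![-1, 0; 0, 0]

/-- The action of `S_1` on `M̃_2(y)`: `S_1w = 0`, `S_1(Tw) = -Tw`. -/
def SMt2 : Module.End k (Fin 2 → k) := Matrix.mulVecLin !![0, 0; 0, -1]

end

/-!
On `L_6(z,y)` one has `T³ = z`, so `T` is invertible and `T³` is central. The operators
`S_1S_2S_1` and `S_2S_1S_2` are both `x ↦ φ(x) T²w` for one linear form `φ`, which gives the braid
relation. Hence a submodule `W` either contains `T²w`, which generates everything because
`S_1(Tw) = (y/z)T²v` with `y/z` invertible, or lies in the kernel of `φ`. In the latter case let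
`x ∈ W`, with coordinates numbered from `0`: `φ(TS_1x) = 0` gives `x₁ = x₅`, then `φ(x) = 0` gives
`x₃ = 0`, and since `T` permutes the coordinates up to scalars, all of them vanish on `W`.
-/

section RankOne

variable {K V : Type*} [DivisionRing K] [AddCommGroup V] [Module K V]

theorem mem_or_le_ker_of_forall_smul_mem {W : Submodule K V} {φ : V →ₗ[K] K} {u : V}
    (h : ∀ x ∈ W, φ x • u ∈ W) : u ∈ W ∨ W ≤ LinearMap.ker φ := by
  refine or_iff_not_imp_left.mpr fun hu x hx => ?_
  by_contra hφ
  exact hu ((W.smul_mem_iff hφ).mp (h x hx))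

end RankOne

section UniversalProperty

variable (R : Type) [CommRing R] (q : R) (A : Type*) [Ring A] [Algebra R A]

/-- Elements of an `R`-algebra `A` subject to the defining relations of `HeckeAlg R q`, i.e. the
data of an algebra homomorphism `HeckeAlg R q → A`. The images of `T` and `T⁻¹` are bundled as a
unit. -/
structure HeckeTriple where
  t : Aˣ
  s₁ : A
  s₂ : A
  quad : (s₁ + 1) * (s₁ - algebraMap R A q) = 0
  cube_comm : (t : A) ^ 3 * s₁ = s₁ * (t : A) ^ 3
  braid : s₁ * s₂ * s₁ = s₂ * s₁ * s₂
  t_mul_s₂ : (t : A) * s₂ = s₁ * t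

namespace HeckeTriple

variable {R q A} (D : HeckeTriple R q A)

/-- The images of the four generators `T, T⁻¹, S_1, S_2` of the presentation. -/
def gens : Fin 4 → A := ![D.t, ↑D.t⁻¹, D.s₁, D.s₂]

theorem lift_gens_eq_of_heckeRel {a b : FreeAlgebra R (Fin 4)} (h : HeckeRel R q a b) :
    FreeAlgebra.lift R D.gens a = FreeAlgebra.lift R D.gens b := by
  cases h with
  | TTinv => simp [gens]
  | TinvT => simp [gens]
  | quad => simpa [gens] using D.quad
  | T3S1 => simpa [gens] using D.cube_comm
  | braid => simpa [gens] using D.braid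
  | TS2 => simpa [gens] using D.t_mul_s₂

/-- The algebra homomorphism out of the affine Hecke algebra given by its presentation. -/
noncomputable def toAlgHom : HeckeAlg R q →ₐ[R] A :=
  RingQuot.liftAlgHom R ⟨FreeAlgebra.lift R D.gens, fun _ _ h => D.lift_gens_eq_of_heckeRel h⟩

theorem toAlgHom_gen (i : Fin 4) : D.toAlgHom (HeckeAlg.gen R q i) = D.gens i := by
  simp [toAlgHom, HeckeAlg.gen]

theorem toAlgHom_T : D.toAlgHom (HeckeAlg.T R q) = D.t := D.toAlgHom_gen 0

theorem toAlgHom_S1 : D.toAlgHom (HeckeAlg.S1 R q) = D.s₁ := D.toAlgHom_gen 2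

theorem toAlgHom_S2 : D.toAlgHom (HeckeAlg.S2 R q) = D.s₂ := D.toAlgHom_gen 3

end HeckeTriple

end UniversalProperty

namespace L6

variable (k : Type) [Field k]

theorem Tmat6_apply (z : k) (x : Fin 6 → k) :
    Tmat6 k z x = ![z * x 2, x 0, x 1, z * x 5, x 3, x 4] := by
  ext i
  fin_cases i <;> simp [Tmat6, Matrix.mulVec, dotProduct, Fin.sum_univ_succ]

theorem SL6_apply (z y : k) (x : Fin 6 → k) :
    SL6 k z y x = ![0, 0, -x 2 + y / z * x 4, -x 3, 0, x 1 - x 5] := by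
  ext i
  fin_cases i <;> simp [SL6, Matrix.mulVec, dotProduct, Fin.sum_univ_succ, sub_eq_add_neg]

theorem Tmat6_single_zero (z : k) :
    Tmat6 k z (Pi.single 0 1) = Pi.single 1 1 := by
  ext i
  fin_cases i <;> simp [Tmat6_apply]

theorem Tmat6_single_two (z : k) :
    Tmat6 k z (Pi.single 2 1) = z • Pi.single 0 1 := by
  ext i
  fin_cases i <;> simp [Tmat6_apply]

theorem Tmat6_single_three (z : k) :
    Tmat6 k z (Pi.single 3 1) = Pi.single 4 1 := by
  ext i
  fin_cases i <;> simp [Tmat6_apply]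

theorem Tmat6_single_five (z : k) :
    Tmat6 k z (Pi.single 5 1) = z • Pi.single 3 1 := by
  ext i
  fin_cases i <;> simp [Tmat6_apply]

theorem SL6_single_four (z y : k) :
    SL6 k z y (Pi.single 4 1) = (y / z) • Pi.single 2 1 := by
  ext i
  fin_cases i <;> simp [SL6_apply]

/-- The action `T⁻¹S_1T` of `S_2` on `L_6(z,y)`: `S_2v = Tw`, `S_2(Tv) = -Tv`, `S_2(T²v) = 0`,
`S_2w = (y/z)Tv`, `S_2(Tw) = -Tw`, `S_2(T²w) = -T²w`. -/
noncomputable def S₂ (z y : k) : Module.End k (Fin 6 → k) := Matrix.mulVecLin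
  !![0, 0,  0, 0,     0,  0;
     0, -1, 0, y / z, 0,  0;
     0, 0,  0, 0,     0,  0;
     0, 0,  0, 0,     0,  0;
     1, 0,  0, 0,     -1, 0;
     0, 0,  0, 0,     0,  -1]

theorem S₂_apply (z y : k) (x : Fin 6 → k) :
    S₂ k z y x = ![0, -x 1 + y / z * x 3, 0, 0, x 0 - x 4, -x 5] := by
  ext i
  fin_cases i <;> simp [S₂, Matrix.mulVec, dotProduct, Fin.sum_univ_succ, sub_eq_add_neg]

theorem Tmat6_pow_three (z : k) : Tmat6 k z ^ 3 = algebraMap k _ z := by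
  refine LinearMap.ext fun x => funext fun i => ?_
  fin_cases i <;> simp [pow_succ, Tmat6_apply]

theorem SL6_add_one_mul_self (z y : k) : (SL6 k z y + 1) * SL6 k z y = 0 := by
  refine LinearMap.ext fun x => funext fun i => ?_
  fin_cases i <;> simp [SL6_apply]

theorem Tmat6_mul_S₂ (z y : k) : Tmat6 k z * S₂ k z y = SL6 k z y * Tmat6 k z := by
  refine LinearMap.ext fun x => funext fun i => ?_
  fin_cases i <;> simp [Tmat6_apply, SL6_apply, S₂_apply]

/-- The linear form `φ` such that `S_1S_2S_1x = φ(x) T²w` on `L_6(z,y)`. -/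
def braidForm (z y : k) : Module.Dual k (Fin 6 → k) :=
  .proj 1 - (y / z) • .proj 3 - .proj 5

theorem braidForm_apply (z y : k) (x : Fin 6 → k) :
    braidForm k z y x = x 1 - y / z * x 3 - x 5 := rfl

theorem SL6_mul_S₂_mul_SL6 (z y : k) :
    SL6 k z y * S₂ k z y * SL6 k z y = (braidForm k z y).smulRight (Pi.single 5 1) := by
  refine LinearMap.ext fun x => funext fun i => ?_
  fin_cases i <;> simp [SL6_apply, S₂_apply, braidForm_apply]
  ring

theorem S₂_mul_SL6_mul_S₂ (z y : k) :
    S₂ k z y * SL6 k z y * S₂ k z y = (braidForm k z y).smulRight (Pi.single 5 1) := by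
  refine LinearMap.ext fun x => funext fun i => ?_
  fin_cases i <;> simp [SL6_apply, S₂_apply, braidForm_apply]
  ring

/-- `T` as an invertible operator on `L_6(z,y)`, with inverse `z⁻¹T²`. -/
noncomputable def Tunit (z : kˣ) : (Module.End k (Fin 6 → k))ˣ :=
  .ofPow (z.map (algebraMap k (Module.End k (Fin 6 → k))).toMonoidHom) (Tmat6 k z) three_ne_zero
    (Tmat6_pow_three k z)

/-- The `H_k`-module structure `L_6(z,y)`. -/
noncomputable def heckeTriple (z : kˣ) (y : k) :
    HeckeTriple k 0 (Module.End k (Fin 6 → k)) where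
  t := Tunit k z
  s₁ := SL6 k z y
  s₂ := S₂ k z y
  quad := by simpa only [map_zero, sub_zero] using SL6_add_one_mul_self k z y
  cube_comm := by
    change Tmat6 k z ^ 3 * _ = _ * Tmat6 k z ^ 3
    rw [Tmat6_pow_three, Algebra.commutes]
  braid := (SL6_mul_S₂_mul_SL6 k z y).trans (S₂_mul_SL6_mul_S₂ k z y).symm
  t_mul_s₂ := Tmat6_mul_S₂ k z y

section Simplicity

variable {k} {z y : k} {W : Submodule k (Fin 6 → k)}

theorem eq_top_of_single_five_mem (hz : z ≠ 0) (hy : y ≠ 0)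
    (hT : ∀ x ∈ W, Tmat6 k z x ∈ W) (hS : ∀ x ∈ W, SL6 k z y x ∈ W)
    (h5 : Pi.single 5 1 ∈ W) : W = ⊤ := by
  have h3 : Pi.single 3 1 ∈ W :=
    (W.smul_mem_iff hz).mp (Tmat6_single_five k z ▸ hT _ h5)
  have h4 : Pi.single 4 1 ∈ W := Tmat6_single_three k z ▸ hT _ h3
  have h2 : Pi.single 2 1 ∈ W :=
    (W.smul_mem_iff (div_ne_zero hy hz)).mp (SL6_single_four k z y ▸ hS _ h4)
  have h0 : Pi.single 0 1 ∈ W :=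
    (W.smul_mem_iff hz).mp (Tmat6_single_two k z ▸ hT _ h2)
  have h1 : Pi.single 1 1 ∈ W := Tmat6_single_zero k z ▸ hT _ h0
  rw [eq_top_iff, ← (Pi.basisFun k (Fin 6)).span_eq, Submodule.span_le, Set.range_subset_iff]
  intro i
  rw [Pi.basisFun_apply]
  fin_cases i <;> assumption

theorem eq_bot_of_le_ker_braidForm (hz : z ≠ 0) (hy : y ≠ 0)
    (hT : ∀ x ∈ W, Tmat6 k z x ∈ W) (hS : ∀ x ∈ W, SL6 k z y x ∈ W)
    (hW : W ≤ LinearMap.ker (braidForm k z y)) : W = ⊥ := by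
  have hφ : ∀ x ∈ W, x 1 - y / z * x 3 - x 5 = 0 := fun x hx => hW hx
  have h15 : ∀ x ∈ W, x 1 = x 5 := fun x hx => by
    have hTS := hφ _ (hT _ (hS x hx))
    simpa [Tmat6_apply, SL6_apply, hz, hy, sub_eq_zero] using hTS
  have h3 : ∀ x ∈ W, x 3 = 0 := fun x hx => by
    simpa [h15 x hx, hz, hy] using hφ x hx
  have h5 : ∀ x ∈ W, x 5 = 0 := fun x hx => by
    simpa [Tmat6_apply, hz] using h3 _ (hT x hx)
  have h4 : ∀ x ∈ W, x 4 = 0 := fun x hx => by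
    simpa [Tmat6_apply] using h5 _ (hT x hx)
  have h1 : ∀ x ∈ W, x 1 = 0 := fun x hx => (h15 x hx).trans (h5 x hx)
  have h0 : ∀ x ∈ W, x 0 = 0 := fun x hx => by
    simpa [Tmat6_apply] using h1 _ (hT x hx)
  have h2 : ∀ x ∈ W, x 2 = 0 := fun x hx => by
    simpa [Tmat6_apply, hz] using h0 _ (hT x hx)
  refine (Submodule.eq_bot_iff W).mpr fun x hx => funext fun i => ?_
  fin_cases i
  exacts [h0 x hx, h1 x hx, h2 x hx, h3 x hx, h4 x hx, h5 x hx]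

theorem eq_bot_or_eq_top (hz : z ≠ 0) (hy : y ≠ 0)
    (hT : ∀ x ∈ W, Tmat6 k z x ∈ W) (hS₁ : ∀ x ∈ W, SL6 k z y x ∈ W)
    (hS₂ : ∀ x ∈ W, S₂ k z y x ∈ W) : W = ⊥ ∨ W = ⊤ := by
  have hφ : ∀ x ∈ W, braidForm k z y x • Pi.single 5 1 ∈ W := fun x hx => by
    rw [← LinearMap.smulRight_apply, ← SL6_mul_S₂_mul_SL6]
    exact hS₁ _ (hS₂ _ (hS₁ x hx))
  rcases mem_or_le_ker_of_forall_smul_mem hφ with h5 | hker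
  · exact .inr (eq_top_of_single_five_mem hz hy hT hS₁ h5)
  · exact .inl (eq_bot_of_le_ker_braidForm hz hy hT hS₁ hker)

end Simplicity

end L6

theorem statement9_general (k : Type) [Field k] (z y : kˣ) :
    ∃ ρ : Hk k →ₐ[k] Module.End k (Fin 6 → k),
      ρ (HeckeAlg.T k 0) = Tmat6 k z ∧ ρ (HeckeAlg.S1 k 0) = SL6 k z y ∧
      (∀ W : Submodule k (Fin 6 → k), (∀ a : Hk k, ∀ x ∈ W, ρ a x ∈ W) → W = ⊥ ∨ W = ⊤) := by
  let D := L6.heckeTriple k z y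
  have hT : D.toAlgHom (HeckeAlg.T k 0) = Tmat6 k z := D.toAlgHom_T
  have hS₁ : D.toAlgHom (HeckeAlg.S1 k 0) = SL6 k z y := D.toAlgHom_S1
  have hS₂ : D.toAlgHom (HeckeAlg.S2 k 0) = L6.S₂ k z y := D.toAlgHom_S2
  refine ⟨D.toAlgHom, hT, hS₁, fun W hW => ?_⟩
  exact L6.eq_bot_or_eq_top z.ne_zero y.ne_zero (hT ▸ hW _) (hS₁ ▸ hW _) (hS₂ ▸ hW _)

/-- For `z, y ∈ k^×`, the formulas defining `L_6(z,y)` satisfy the defining relations of `H_k`, so they endow the `6`-dimensional `k`-vector space with an `H_k`-module structure, and the `H_k`-module `L_6(z,y)` is simple. -/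
theorem statement9 (p : ℕ) [Fact p.Prime] (k : Type) [Field k] [IsAlgClosed k] [CharP k p]
    (z y : kˣ) :
    ∃ ρ : Hk k →ₐ[k] Module.End k (Fin 6 → k),
      ρ (HeckeAlg.T k 0) = Tmat6 k z ∧ ρ (HeckeAlg.S1 k 0) = SL6 k z y ∧
      (∀ W : Submodule k (Fin 6 → k), (∀ a : Hk k, ∀ x ∈ W, ρ a x ∈ W) → W = ⊥ ∨ W = ⊤) :=
  statement9_general k z y
end
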